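/- For every ε > 0 there exists L > 0 with the following property. Let X and Y be independent finitely supported random variables taking values in G = 𝔽₂ⁿ and suppose that H[X + Y] = H[X] + H[Y] − s for some s ≥ 0. Then there exists a subspace V ⊆ G with H[𝐔_V] ≤ L (H[X] + H[Y]) such that both H[X | π_V(X)] ≥ s − ε (H[X] + H[Y]) and H[Y | π_V(Y)] ≥ s − ε (H[X] + H[Y]). -/

import Mathlib

open Real Pointwise

noncomputable section

abbrev Fvec (n : ℕ) : Type := Fin n → ZMod 2

/-- Shannon entropy (natural log) of a finitely supported distribution. -/
def ent {A : Type*} (p : A → ℝ) : ℝ := ∑ᶠ a, Real.negMulLog (p a)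

/-- `p` is a (finitely supported) probability distribution. -/
def IsDist {A : Type*} (p : A → ℝ) : Prop := (∀ a, 0 ≤ p a) ∧ ∑ᶠ a, p a = 1

/-- Pushforward of a distribution along a map: the distribution of `f(X)` for `X ∼ p`. -/
def push {A B : Type*} (f : A → B) (p : A → ℝ) : B → ℝ := fun b => ∑ᶠ a ∈ f ⁻¹' {b}, p a

/-- Joint distribution of a pair of independent random variables. -/
def prodDist {A B : Type*} (p : A → ℝ) (q : B → ℝ) : A × B → ℝ := fun z => p z.1 * q z.2

/-- Distribution of `X + Y` for independent `X ∼ p`, `Y ∼ q`. -/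
def conv {A : Type*} [AddGroup A] (p q : A → ℝ) : A → ℝ := fun z => ∑ᶠ x, p x * q (z - x)

/-- The distribution of `X` conditioned on `U = b`, where `r` is the joint distribution of `(X, U)`. -/
def fiber {A B : Type*} (r : A × B → ℝ) (b : B) : A → ℝ := fun a => r (a, b) / push Prod.snd r b

/-- Conditional entropy `H[X | U]` of a joint distribution `r` of `(X, U)`. -/
def condEnt {A B : Type*} (r : A × B → ℝ) : ℝ := ∑ᶠ b, push Prod.snd r b * ent (fiber r b)

/-- Doubling mass `s[X ; Y]` (of independent copies with distributions `p`, `q`). -/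
def sDouble {A : Type*} [AddGroup A] (p q : A → ℝ) : ℝ := ent p + ent q - ent (conv p q)

/-- Conditional doubling mass `s[X | U ; Y | W] = 𝔼_{u ∼ U, w ∼ W} s[X_u ; Y_w]`,
where `r1`, `r2` are the joint distributions of `(X, U)` and `(Y, W)`. -/
def sCond {A U W : Type*} [AddGroup A] (r1 : A × U → ℝ) (r2 : A × W → ℝ) : ℝ :=
  ∑ᶠ u, ∑ᶠ w, push Prod.snd r1 u * push Prod.snd r2 w * sDouble (fiber r1 u) (fiber r2 w)

/-- Conditional mutual information `I[A : B | S]` of a joint distribution of `(A, B, S)`. -/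
def condMI {A B S : Type*} (r : A × B × S → ℝ) : ℝ :=
  ent (push (fun z => (z.1, z.2.2)) r) + ent (push (fun z => z.2) r)
    - ent r - ent (push (fun z => z.2.2) r)

/-- Uniform distribution on a set. -/
def unifOn {A : Type*} (s : Set A) : A → ℝ := s.indicator fun _ => (Nat.card s : ℝ)⁻¹

/-- Entropic Ruzsa distance `d[X ; Y]`. -/
def dRuzsa {A : Type*} [AddGroup A] (p q : A → ℝ) : ℝ := ent (conv p q) - ent p / 2 - ent q / 2

/-- Joint distribution of `(X, X + Y)` for independent `X ∼ p`, `Y ∼ q`. -/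
def jointSum {A : Type*} [AddGroup A] (p q : A → ℝ) : A × A → ℝ :=
  push (fun z : A × A => (z.1, z.1 + z.2)) (prodDist p q)

/-- Joint distribution of `(X, π_V(X))`. -/
def selfProj {n : ℕ} (V : Submodule (ZMod 2) (Fvec n)) (p : Fvec n → ℝ) :
    Fvec n × (Fvec n ⧸ V) → ℝ := push (fun x => (x, V.mkQ x)) p

/-- Joint distribution of independent `(X₁, X₂, Y₁, Y₂)` with `X₁, X₂ ∼ p` and `Y₁, Y₂ ∼ q`. -/
def quad {A : Type*} (p q : A → ℝ) : A × A × A × A → ℝ :=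
  fun z => p z.1 * p z.2.1 * q z.2.2.1 * q z.2.2.2

/-- Distribution of `X₁ + ⋯ + X_k` for independent `Xᵢ ∼ p i`. -/
def indepSum {A : Type*} [AddCommGroup A] (k : ℕ) (p : Fin k → A → ℝ) : A → ℝ :=
  push (fun x : Fin k → A => ∑ i, x i) (fun x => ∏ i, p i (x i))

/-- Statement `A(η, L, c)` from the paper. -/
def StA (η L c : ℝ) : Prop :=
  ∀ (n : ℕ) (p q : Fvec n → ℝ), IsDist p → IsDist q →
    ent (conv p q) ≤ (1 - η) * (ent p + ent q) →
    ∃ V : Submodule (ZMod 2) (Fvec n),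
      ent (unifOn (V : Set (Fvec n))) ≤ L * (ent p + ent q) ∧
      ent (push V.mkQ p) + ent (push V.mkQ q) ≤ (1 - c) * (ent p + ent q)

/-- Statement `B(η, ε, L)` from the paper. -/
def StB (η ε L : ℝ) : Prop :=
  ∀ (n : ℕ) (p q : Fvec n → ℝ), IsDist p → IsDist q →
    ∃ V : Submodule (ZMod 2) (Fvec n),
      ent (unifOn (V : Set (Fvec n))) ≤ L * (ent p + ent q) ∧
      ent (conv (push V.mkQ p) (push V.mkQ q)) ≥
        (1 - η) * (ent (push V.mkQ p) + ent (push V.mkQ q)) - ε * (ent p + ent q)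


lemma ent_eq {α : Type*} [Fintype α] (p : α → ℝ) : ent p = ∑ a, Real.negMulLog (p a) :=
  finsum_eq_sum_of_fintype _

lemma push_eq {Ω α : Type*} [Fintype Ω] [DecidableEq α] (f : Ω → α) (p : Ω → ℝ) (b : α) :
    push f p b = ∑ ω, if f ω = b then p ω else 0 := by
  unfold push
  rw [finsum_mem_def, finsum_eq_sum_of_fintype]
  refine Finset.sum_congr rfl fun ω _ => ?_
  simp [Set.indicator]

lemma sum_push {Ω α : Type*} [Fintype Ω] [Fintype α] (f : Ω → α) (p : Ω → ℝ) (F : α → ℝ) :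
    ∑ b, push f p b * F b = ∑ ω, p ω * F (f ω) := by
  classical
  simp_rw [push_eq, Finset.sum_mul, ite_mul, zero_mul]
  rw [Finset.sum_comm]
  simp

lemma isDist_iff {α : Type*} [Fintype α] (p : α → ℝ) :
    IsDist p ↔ (∀ a, 0 ≤ p a) ∧ ∑ a, p a = 1 := by
  unfold IsDist; rw [finsum_eq_sum_of_fintype]

lemma ent_push {Ω α : Type*} [Fintype Ω] [Finite α] (X : Ω → α) (μ : Ω → ℝ) :
    ent (push X μ) = -∑ ω, μ ω * Real.log (push X μ (X ω)) := by
  cases nonempty_fintype α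
  rw [ent_eq, ← sum_push X μ (fun b => Real.log (push X μ b)), ← Finset.sum_neg_distrib]
  refine Finset.sum_congr rfl fun a _ => ?_
  simp [Real.negMulLog]

lemma push_nonneg {Ω α : Type*} [Finite Ω] {μ : Ω → ℝ} (h : ∀ ω, 0 ≤ μ ω) (X : Ω → α) (a : α) :
    0 ≤ push X μ a := by
  classical
  cases nonempty_fintype Ω
  rw [push_eq]
  exact Finset.sum_nonneg fun ω _ => by split_ifs; exacts [h ω, le_rfl]

lemma push_isDist {Ω α : Type*} [Finite Ω] [Finite α] {μ : Ω → ℝ} (h : IsDist μ) (X : Ω → α) :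
    IsDist (push X μ) := by
  cases nonempty_fintype Ω
  cases nonempty_fintype α
  rw [isDist_iff] at h ⊢
  refine ⟨push_nonneg h.1 X, ?_⟩
  have := sum_push X μ (fun _ => 1)
  simp only [mul_one] at this
  rw [this, h.2]

lemma push_push {Ω α β : Type*} [Finite Ω] [Finite α] (g : α → β) (f : Ω → α) (μ : Ω → ℝ) :
    push g (push f μ) = push (fun ω => g (f ω)) μ := by
  classical
  cases nonempty_fintype Ω
  cases nonempty_fintype α
  funext b
  rw [push_eq, push_eq]
  have := sum_push f μ (fun a => if g a = b then 1 else 0)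
  simpa using this

lemma push_le_push {Ω α β : Type*} [Finite Ω] {μ : Ω → ℝ} (h : ∀ ω, 0 ≤ μ ω) (X : Ω → α)
    (Y : Ω → β) (a : α) (b : β) (hXY : ∀ ω, X ω = a → Y ω = b) :
    push X μ a ≤ push Y μ b := by
  classical
  cases nonempty_fintype Ω
  rw [push_eq, push_eq]
  refine Finset.sum_le_sum fun ω _ => ?_
  by_cases h1 : X ω = a
  · simp [h1, hXY ω h1]
  · simp only [h1, if_false]; split_ifs; exacts [h ω, le_rfl]

lemma le_push {Ω α : Type*} [Finite Ω] {μ : Ω → ℝ} (h : ∀ ω, 0 ≤ μ ω) (X : Ω → α) (ω : Ω) :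
    μ ω ≤ push X μ (X ω) := by
  classical
  cases nonempty_fintype Ω
  rw [push_eq]
  have := Finset.single_le_sum (f := fun ω' => if X ω' = X ω then μ ω' else 0)
    (fun ω' _ => by split_ifs; exacts [h ω', le_rfl]) (Finset.mem_univ ω)
  simpa using this

/-- Entropy of a random variable `X` on the finite weighted space `(Ω, μ)`. -/
def HH {Ω α : Type*} (μ : Ω → ℝ) (X : Ω → α) : ℝ := ent (push X μ)

lemma HH_le {Ω α β : Type*} [Finite Ω] [Finite α] [Finite β] {μ : Ω → ℝ} (h : ∀ ω, 0 ≤ μ ω)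
    (X : Ω → α) (Y : Ω → β) (hXY : ∀ ω ω', X ω = X ω' → Y ω = Y ω') : HH μ Y ≤ HH μ X := by
  cases nonempty_fintype Ω
  unfold HH
  rw [ent_push, ent_push, neg_le_neg_iff]
  refine Finset.sum_le_sum fun ω _ => ?_
  rcases (h ω).eq_or_lt with h0 | h0
  · simp [← h0]
  · refine mul_le_mul_of_nonneg_left (Real.log_le_log ?_ ?_) h0.le
    · exact h0.trans_le (le_push h X ω)
    · exact push_le_push h X Y _ _ fun ω' e => hXY _ _ e

lemma HH_congr {Ω α β : Type*} [Finite Ω] [Finite α] [Finite β] {μ : Ω → ℝ} (h : ∀ ω, 0 ≤ μ ω)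
    (X : Ω → α) (Y : Ω → β) (hXY : ∀ ω ω', X ω = X ω' ↔ Y ω = Y ω') : HH μ X = HH μ Y :=
  le_antisymm (HH_le h _ _ fun _ _ e => (hXY _ _).2 e) (HH_le h _ _ fun _ _ e => (hXY _ _).1 e)

lemma HH_submod {Ω α β γ : Type*} [Finite Ω] [Finite α] [Finite β] [Finite γ] {μ : Ω → ℝ}
    (h : IsDist μ) (X : Ω → α) (Y : Ω → β) (Z : Ω → γ) :
    HH μ (fun ω => (X ω, Y ω, Z ω)) + HH μ Z ≤
      HH μ (fun ω => (X ω, Z ω)) + HH μ (fun ω => (Y ω, Z ω)) := by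
  classical
  cases nonempty_fintype Ω
  cases nonempty_fintype α
  cases nonempty_fintype β
  cases nonempty_fintype γ
  rw [isDist_iff] at h
  obtain ⟨h0, h1⟩ := h
  set A := push (fun ω => (X ω, Y ω, Z ω)) μ with hA
  set B := push (fun ω => (X ω, Z ω)) μ with hB
  set C := push (fun ω => (Y ω, Z ω)) μ with hC
  set D := push Z μ with hD
  have A0 : ∀ x, 0 ≤ A x := push_nonneg h0 _
  have B0 : ∀ x, 0 ≤ B x := push_nonneg h0 _
  have C0 : ∀ x, 0 ≤ C x := push_nonneg h0 _
  have D0 : ∀ x, 0 ≤ D x := push_nonneg h0 _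
  have hBs : ∀ z, ∑ x, B (x, z) = D z := by
    intro z
    simp only [hB, hD, push_eq, Prod.mk.injEq]
    rw [Finset.sum_comm]
    refine Finset.sum_congr rfl fun ω _ => ?_
    by_cases e : Z ω = z <;> simp [e]
  have hCs : ∀ z, ∑ x, C (x, z) = D z := by
    intro z
    simp only [hC, hD, push_eq, Prod.mk.injEq]
    rw [Finset.sum_comm]
    refine Finset.sum_congr rfl fun ω _ => ?_
    by_cases e : Z ω = z <;> simp [e]
  have hDs : ∑ z, D z = 1 := by
    have := sum_push Z μ (fun _ => 1)
    simp only [mul_one] at this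
    rw [hD, this, h1]
  have key : ∑ ω, μ ω * (Real.log (B (X ω, Z ω)) + Real.log (C (Y ω, Z ω))
      - Real.log (A (X ω, Y ω, Z ω)) - Real.log (D (Z ω))) ≤ 0 := by
    have s1 : ∑ ω, μ ω * (Real.log (B (X ω, Z ω)) + Real.log (C (Y ω, Z ω))
        - Real.log (A (X ω, Y ω, Z ω)) - Real.log (D (Z ω))) ≤
        ∑ ω, μ ω * (B (X ω, Z ω) * C (Y ω, Z ω) / (A (X ω, Y ω, Z ω) * D (Z ω)) - 1) := by
      refine Finset.sum_le_sum fun ω _ => ?_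
      rcases (h0 ω).eq_or_lt with e | e
      · simp [← e]
      · refine mul_le_mul_of_nonneg_left ?_ e.le
        have a1 : 0 < A (X ω, Y ω, Z ω) :=
          e.trans_le (le_push h0 (fun ω => (X ω, Y ω, Z ω)) ω)
        have b1 : 0 < B (X ω, Z ω) := e.trans_le (le_push h0 (fun ω => (X ω, Z ω)) ω)
        have c1 : 0 < C (Y ω, Z ω) := e.trans_le (le_push h0 (fun ω => (Y ω, Z ω)) ω)
        have d1 : 0 < D (Z ω) := e.trans_le (le_push h0 Z ω)
        have := Real.log_le_sub_one_of_pos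
          (show 0 < B (X ω, Z ω) * C (Y ω, Z ω) / (A (X ω, Y ω, Z ω) * D (Z ω)) by positivity)
        rw [Real.log_div (by positivity) (by positivity), Real.log_mul b1.ne' c1.ne',
          Real.log_mul a1.ne' d1.ne'] at this
        linarith
    have s2 : ∑ ω, μ ω * (B (X ω, Z ω) * C (Y ω, Z ω) / (A (X ω, Y ω, Z ω) * D (Z ω)) - 1)
        = ∑ t : α × β × γ, A t * (B (t.1, t.2.2) * C (t.2.1, t.2.2) / (A t * D t.2.2)) - 1 := by
      rw [hA, sum_push (fun ω => (X ω, Y ω, Z ω)) μ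
        (fun t => (B (t.1, t.2.2) * C (t.2.1, t.2.2) /
          (push (fun ω => (X ω, Y ω, Z ω)) μ t * D t.2.2)))]
      simp only [mul_sub, Finset.sum_sub_distrib, mul_one, h1]
    have s3 : ∑ t : α × β × γ, A t * (B (t.1, t.2.2) * C (t.2.1, t.2.2) / (A t * D t.2.2))
        ≤ ∑ t : α × β × γ, B (t.1, t.2.2) * C (t.2.1, t.2.2) / D t.2.2 := by
      refine Finset.sum_le_sum fun t _ => ?_
      rcases (A0 t).eq_or_lt with e | e
      · rw [← e, zero_mul]
        exact div_nonneg (mul_nonneg (B0 _) (C0 _)) (D0 _)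
      · rw [← mul_div_assoc, mul_div_mul_left _ _ e.ne']
    have s4 : ∑ t : α × β × γ, B (t.1, t.2.2) * C (t.2.1, t.2.2) / D t.2.2 ≤ 1 := by
      rw [← hDs, Fintype.sum_prod_type]
      simp_rw [Fintype.sum_prod_type]
      have : ∀ x : α, ∑ y, ∑ z, B (x, z) * C (y, z) / D z = ∑ z, B (x, z) * D z / D z := by
        intro x
        rw [Finset.sum_comm]
        refine Finset.sum_congr rfl fun z _ => ?_
        rw [← Finset.sum_div, ← Finset.mul_sum, hCs]
      simp_rw [this]
      rw [Finset.sum_comm]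
      refine Finset.sum_le_sum fun z _ => ?_
      rw [← Finset.sum_div, ← Finset.sum_mul, hBs]
      rcases (D0 z).eq_or_lt with e | e
      · simp [← e]
      · rw [mul_div_assoc, div_self e.ne', mul_one]
    linarith
  simp only [HH]
  rw [ent_push, ent_push, ent_push, ent_push]
  simp only [mul_add, mul_sub, Finset.sum_add_distrib, Finset.sum_sub_distrib] at key
  linarith

/-- Conditioning on more information reduces entropy. -/
lemma HH_cond_mono {Ω α β γ : Type*} [Finite Ω] [Finite α] [Finite β] [Finite γ] {μ : Ω → ℝ}
    (h : IsDist μ) (X : Ω → α) (Y : Ω → β) (Z : Ω → γ)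
    (hYZ : ∀ ω ω', Y ω = Y ω' → Z ω = Z ω') :
    HH μ (fun ω => (X ω, Y ω)) - HH μ Y ≤ HH μ (fun ω => (X ω, Z ω)) - HH μ Z := by
  have h0 := h.1
  have e1 := HH_submod h X Y Z
  have e2 : HH μ (fun ω => (X ω, Y ω, Z ω)) = HH μ (fun ω => (X ω, Y ω)) :=
    HH_congr h0 _ _ fun ω ω' => by
      simp only [Prod.mk.injEq]
      exact ⟨fun h => ⟨h.1, h.2.1⟩, fun h => ⟨h.1, h.2, hYZ _ _ h.2⟩⟩
  have e3 : HH μ (fun ω => (Y ω, Z ω)) = HH μ Y :=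
    HH_congr h0 _ _ fun ω ω' => by
      simp only [Prod.mk.injEq]
      exact ⟨fun h => h.1, fun h => ⟨h, hYZ _ _ h⟩⟩
  linarith

lemma ent_const {α : Type*} [Finite α] {μ : α → ℝ} (h : IsDist μ) :
    HH μ (fun _ => ()) = 0 := by
  cases nonempty_fintype α
  rw [isDist_iff] at h
  have : push (fun _ : α => ()) μ () = 1 := by
    rw [push_eq]; simpa using h.2
  simp [HH, ent_eq, this]

/-- Subadditivity. -/
lemma HH_subadd {Ω α β : Type*} [Finite Ω] [Finite α] [Finite β] {μ : Ω → ℝ}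
    (h : IsDist μ) (X : Ω → α) (Y : Ω → β) :
    HH μ (fun ω => (X ω, Y ω)) ≤ HH μ X + HH μ Y := by
  have e1 := HH_cond_mono h X Y (fun _ => ()) (fun _ _ _ => rfl)
  have e2 : HH μ (fun ω => (X ω, ())) = HH μ X := HH_congr h.1 _ _ fun ω ω' => by simp
  have e3 := ent_const h
  linarith

lemma HH_nonneg {Ω α : Type*} [Finite Ω] [Finite α] {μ : Ω → ℝ} (h : IsDist μ) (X : Ω → α) :
    0 ≤ HH μ X := by
  rw [← ent_const h]
  exact HH_le h.1 _ _ fun _ _ _ => rfl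

lemma push_id {α : Type*} (μ : α → ℝ) : push (fun a => a) μ = μ := by
  funext a
  simp [push]

lemma ent_eq_HH {α : Type*} (μ : α → ℝ) : ent μ = HH μ (fun a => a) := by
  rw [HH, push_id]

lemma ent_nonneg {α : Type*} [Finite α] {μ : α → ℝ} (h : IsDist μ) : 0 ≤ ent μ := by
  rw [ent_eq_HH]; exact HH_nonneg h _

lemma HH_equiv {Ω α : Type*} [Finite Ω] (μ : Ω → ℝ) (σ : Ω ≃ Ω)
    (hσ : ∀ ω, μ (σ ω) = μ ω) (X : Ω → α) : HH μ (fun ω => X (σ ω)) = HH μ X := by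
  classical
  cases nonempty_fintype Ω
  unfold HH
  congr 1
  funext a
  rw [push_eq, push_eq]
  rw [← Equiv.sum_comp σ (fun ω => if X ω = a then μ ω else 0)]
  simp [hσ]

lemma prodDist_isDist {α β : Type*} [Finite α] [Finite β] {p : α → ℝ} {q : β → ℝ}
    (hp : IsDist p) (hq : IsDist q) : IsDist (prodDist p q) := by
  cases nonempty_fintype α
  cases nonempty_fintype β
  rw [isDist_iff] at *
  refine ⟨fun z => mul_nonneg (hp.1 _) (hq.1 _), ?_⟩
  rw [Fintype.sum_prod_type]
  simp only [prodDist]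
  simp_rw [← Finset.mul_sum, hq.2, mul_one, hp.2]

lemma push_prod {Ω Ω' α β : Type*} [Finite Ω] [Finite Ω'] (μ : Ω → ℝ) (ν : Ω' → ℝ)
    (X : Ω → α) (Y : Ω' → β) :
    push (fun ω : Ω × Ω' => (X ω.1, Y ω.2)) (prodDist μ ν) = prodDist (push X μ) (push Y ν) := by
  classical
  cases nonempty_fintype Ω
  cases nonempty_fintype Ω'
  funext z
  simp only [prodDist, push_eq, Fintype.sum_prod_type, Finset.sum_mul_sum]
  refine Finset.sum_congr rfl fun a _ => Finset.sum_congr rfl fun b _ => ?_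
  by_cases h1 : X a = z.1 <;> by_cases h2 : Y b = z.2 <;> simp [Prod.ext_iff, h1, h2]

lemma push_fst {Ω Ω' α : Type*} [Finite Ω] [Finite Ω'] (μ : Ω → ℝ) {ν : Ω' → ℝ} (hν : IsDist ν)
    (X : Ω → α) : push (fun ω : Ω × Ω' => X ω.1) (prodDist μ ν) = push X μ := by
  classical
  cases nonempty_fintype Ω
  cases nonempty_fintype Ω'
  rw [isDist_iff] at hν
  funext z
  simp only [prodDist, push_eq, Fintype.sum_prod_type]
  refine Finset.sum_congr rfl fun a _ => ?_
  by_cases h1 : X a = z <;> simp [h1, ← Finset.mul_sum, hν.2]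

lemma push_snd {Ω Ω' α : Type*} [Finite Ω] [Finite Ω'] {μ : Ω → ℝ} (ν : Ω' → ℝ) (hμ : IsDist μ)
    (X : Ω' → α) : push (fun ω : Ω × Ω' => X ω.2) (prodDist μ ν) = push X ν := by
  classical
  cases nonempty_fintype Ω
  cases nonempty_fintype Ω'
  rw [isDist_iff] at hμ
  funext z
  simp only [prodDist, push_eq, Fintype.sum_prod_type_right]
  refine Finset.sum_congr rfl fun a _ => ?_
  by_cases h1 : X a = z <;> simp [h1, ← Finset.sum_mul, hμ.2]

/-- Chain rule for a kernel. -/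
lemma ent_kernel {α τ : Type*} [Finite α] [Finite τ] (P : τ → ℝ) (f : τ → α → ℝ)
    (hf : ∀ t, IsDist (f t)) :
    ent (fun z : α × τ => P z.2 * f z.2 z.1) = ent P + ∑ᶠ t, P t * ent (f t) := by
  cases nonempty_fintype α
  cases nonempty_fintype τ
  rw [finsum_eq_sum_of_fintype]
  simp only [ent_eq, Fintype.sum_prod_type_right, Real.negMulLog_mul, Finset.sum_add_distrib]
  refine congrArg₂ _ (Finset.sum_congr rfl fun t _ => ?_) (Finset.sum_congr rfl fun t _ => ?_)
  · rw [← Finset.sum_mul, ((isDist_iff _).1 (hf t)).2, one_mul]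
  · rw [← Finset.mul_sum]

lemma ent_prodDist {α β : Type*} [Finite α] [Finite β] {p : α → ℝ} {q : β → ℝ}
    (hp : IsDist p) (hq : IsDist q) : ent (prodDist p q) = ent p + ent q := by
  have h := ent_kernel q (fun _ : β => p) (fun _ => hp)
  have e : HH (prodDist p q) (fun z => (z.1, z.2)) = HH (prodDist p q) (fun z => (z.1, z.2)) := rfl
  cases nonempty_fintype α
  cases nonempty_fintype β
  rw [finsum_eq_sum_of_fintype, ← Finset.sum_mul, ((isDist_iff _).1 hq).2, one_mul] at h
  rw [add_comm (ent p), ← h]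
  congr 1
  funext z
  simp [prodDist, mul_comm]

lemma HH_prod {Ω Ω' α β : Type*} [Finite Ω] [Finite Ω'] [Finite α] [Finite β] {μ : Ω → ℝ}
    {ν : Ω' → ℝ} (hμ : IsDist μ) (hν : IsDist ν) (X : Ω → α) (Y : Ω' → β) :
    HH (prodDist μ ν) (fun ω : Ω × Ω' => (X ω.1, Y ω.2)) = HH μ X + HH ν Y := by
  unfold HH
  rw [push_prod, ent_prodDist (push_isDist hμ _) (push_isDist hν _)]

lemma conv_eq_push {G : Type*} [AddCommGroup G] [Finite G] (p q : G → ℝ) :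
    conv p q = push (fun z : G × G => z.1 + z.2) (prodDist p q) := by
  classical
  cases nonempty_fintype G
  funext z
  rw [push_eq, Fintype.sum_prod_type]
  unfold conv
  rw [finsum_eq_sum_of_fintype]
  refine Finset.sum_congr rfl fun x _ => ?_
  have : ∀ y, (x + y = z) ↔ (y = z - x) := fun y => by rw [eq_sub_iff_add_eq, add_comm]
  simp [this, prodDist]

lemma conv_isDist {G : Type*} [AddCommGroup G] [Finite G] {p q : G → ℝ} (hp : IsDist p)
    (hq : IsDist q) : IsDist (conv p q) := by
  rw [conv_eq_push]; exact push_isDist (prodDist_isDist hp hq) _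

lemma push_add {Ω Ω' G : Type*} [Finite Ω] [Finite Ω'] [AddCommGroup G] [Finite G]
    (μ : Ω → ℝ) (ν : Ω' → ℝ) (X : Ω → G) (Y : Ω' → G) :
    push (fun ω : Ω × Ω' => X ω.1 + Y ω.2) (prodDist μ ν) = conv (push X μ) (push Y ν) := by
  rw [conv_eq_push, ← push_prod, push_push]

lemma conv_comm' {G : Type*} [AddCommGroup G] [Finite G] (p q : G → ℝ) : conv p q = conv q p := by
  cases nonempty_fintype G
  funext z
  unfold conv
  rw [finsum_eq_sum_of_fintype, finsum_eq_sum_of_fintype,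
    ← Equiv.sum_comp (Equiv.subLeft z)]
  refine Finset.sum_congr rfl fun x _ => ?_
  simp [mul_comm]

lemma push_conv {G G' : Type*} [AddCommGroup G] [Finite G] [AddCommGroup G'] [Finite G']
    (φ : G →+ G') (p q : G → ℝ) : push φ (conv p q) = conv (push φ p) (push φ q) := by
  rw [conv_eq_push, push_push, ← push_add]
  simp

/-- Disintegration. -/
lemma exists_ker {α τ : Type*} [Finite α] [Finite τ] {r : α × τ → ℝ} (hr : IsDist r) :
    ∃ (P : τ → ℝ) (f : τ → α → ℝ), IsDist P ∧ (∀ t, IsDist (f t)) ∧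
      ∀ a t, r (a, t) = P t * f t a := by
  classical
  cases nonempty_fintype α
  cases nonempty_fintype τ
  have h := (isDist_iff _).1 hr
  have hne : Nonempty α := by
    by_contra hc
    rw [not_nonempty_iff] at hc
    have := h.2
    simp at this
  have hP : ∀ t, push Prod.snd r t = ∑ a, r (a, t) := by
    intro t
    rw [push_eq, Fintype.sum_prod_type]
    simp
  refine ⟨push Prod.snd r, fun t => if push Prod.snd r t = 0 then Pi.single (Classical.arbitrary α) 1
    else fun a => r (a, t) / push Prod.snd r t, push_isDist hr _, fun t => ?_, fun a t => ?_⟩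
  · beta_reduce; split_ifs with e
    · rw [isDist_iff]
      refine ⟨fun a => ?_, by simp⟩
      by_cases h : a = Classical.arbitrary α
      · subst h; simp
      · simp [Pi.single_apply, h]
    · rw [isDist_iff]
      refine ⟨fun a => div_nonneg (h.1 _) (push_nonneg h.1 _ _), ?_⟩
      rw [← Finset.sum_div, ← hP, div_self e]
  · beta_reduce; split_ifs with e
    · rw [e, zero_mul]
      rw [hP, Finset.sum_eq_zero_iff_of_nonneg (fun a _ => h.1 _)] at e
      exact e a (Finset.mem_univ _)
    · rw [mul_div_cancel₀ _ e]

/-- `(P, f)` is a disintegration of the law of `(X, T)`: `T ∼ P` and `(X | T = t) ∼ f t`. -/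
structure IsKer {Ω α τ : Type} (μ : Ω → ℝ) (X : Ω → α) (T : Ω → τ) (P : τ → ℝ)
    (f : τ → α → ℝ) : Prop where
  distP : IsDist P
  distf : ∀ t, IsDist (f t)
  eq : ∀ a t, push (fun ω => (X ω, T ω)) μ (a, t) = P t * f t a

lemma exists_isKer {Ω α τ : Type} [Finite Ω] [Finite α] [Finite τ] {μ : Ω → ℝ} (h : IsDist μ)
    (X : Ω → α) (T : Ω → τ) : ∃ P f, IsKer μ X T P f := by
  obtain ⟨P, f, h1, h2, h3⟩ := exists_ker (push_isDist h (fun ω => (X ω, T ω)))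
  exact ⟨P, f, h1, h2, h3⟩

section ker
variable {Ω Ω' α β τ τ' G : Type} [Fintype Ω] [Fintype Ω'] [Fintype α] [Fintype β] [Fintype τ]
  [Fintype τ'] [AddCommGroup G] [Fintype G]

lemma IsKer.push_eq' {μ : Ω → ℝ} {X : Ω → α} {T : Ω → τ} {P : τ → ℝ} {f : τ → α → ℝ}
    (k : IsKer μ X T P f) : push (fun ω => (X ω, T ω)) μ = fun z => P z.2 * f z.2 z.1 := by
  funext z
  exact k.eq z.1 z.2

lemma IsKer.pushT {μ : Ω → ℝ} {X : Ω → α} {T : Ω → τ} {P : τ → ℝ} {f : τ → α → ℝ}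
    (k : IsKer μ X T P f) : push T μ = P := by
  classical
  have : push T μ = push Prod.snd (push (fun ω => (X ω, T ω)) μ) := by rw [push_push]
  rw [this, k.push_eq']
  funext t
  rw [_root_.push_eq, Fintype.sum_prod_type]
  simp only [Finset.sum_ite_eq', Finset.mem_univ, if_true]
  rw [← Finset.mul_sum, ((isDist_iff _).1 (k.distf t)).2, mul_one]

lemma IsKer.pushX {μ : Ω → ℝ} {X : Ω → α} {T : Ω → τ} {P : τ → ℝ} {f : τ → α → ℝ}
    (k : IsKer μ X T P f) (a : α) : push X μ a = ∑ t, P t * f t a := by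
  classical
  have : push X μ = push Prod.fst (push (fun ω => (X ω, T ω)) μ) := by rw [push_push]
  rw [this, k.push_eq']
  rw [_root_.push_eq, Fintype.sum_prod_type_right]
  simp

lemma IsKer.ent_sum {μ : Ω → ℝ} {X : Ω → α} {T : Ω → τ} {P : τ → ℝ} {f : τ → α → ℝ}
    (k : IsKer μ X T P f) :
    ∑ t, P t * ent (f t) = HH μ (fun ω => (X ω, T ω)) - HH μ T := by
  unfold HH
  rw [k.push_eq', k.pushT, ent_kernel P f k.distf, finsum_eq_sum_of_fintype]
  ring

lemma IsKer.map {μ : Ω → ℝ} {X : Ω → α} {T : Ω → τ} {P : τ → ℝ} {f : τ → α → ℝ}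
    (k : IsKer μ X T P f) (φ : α → β) :
    IsKer μ (fun ω => φ (X ω)) T P (fun t => push φ (f t)) := by
  classical
  refine ⟨k.distP, fun t => push_isDist (k.distf t) _, fun b t => ?_⟩
  have : push (fun ω => (φ (X ω), T ω)) μ
    = push (fun z : α × τ => (φ z.1, z.2)) (push (fun ω => (X ω, T ω)) μ) := by rw [push_push]
  rw [this, k.push_eq', _root_.push_eq, _root_.push_eq, Fintype.sum_prod_type, Finset.mul_sum]
  refine Finset.sum_congr rfl fun a _ => ?_
  by_cases e : φ a = b <;> simp [e]

lemma IsKer.add {μ : Ω → ℝ} {X : Ω → G} {T : Ω → τ} {P : τ → ℝ} {f : τ → G → ℝ}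
    (k : IsKer μ X T P f) {ν : Ω' → ℝ} {Y : Ω' → G} {T' : Ω' → τ'} {Q : τ' → ℝ} {g : τ' → G → ℝ}
    (l : IsKer ν Y T' Q g) :
    IsKer (prodDist μ ν) (fun ω => X ω.1 + Y ω.2) (fun ω => (T ω.1, T' ω.2)) (prodDist P Q)
      (fun t => conv (f t.1) (g t.2)) := by
  classical
  refine ⟨prodDist_isDist k.distP l.distP, fun t => conv_isDist (k.distf _) (l.distf _),
    fun a t => ?_⟩
  have : push (fun ω : Ω × Ω' => (X ω.1 + Y ω.2, (T ω.1, T' ω.2))) (prodDist μ ν)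
    = push (fun z : (G × τ) × (G × τ') => (z.1.1 + z.2.1, (z.1.2, z.2.2)))
      (push (fun ω : Ω × Ω' => ((X ω.1, T ω.1), (Y ω.2, T' ω.2))) (prodDist μ ν)) := by
    rw [push_push]
  rw [this, push_prod μ ν (fun ω => (X ω, T ω)) (fun ω => (Y ω, T' ω)), k.push_eq', l.push_eq',
    conv_eq_push, _root_.push_eq, _root_.push_eq]
  simp only [Fintype.sum_prod_type, prodDist, Finset.mul_sum]
  refine Finset.sum_congr rfl fun x _ => ?_
  rw [Finset.sum_comm]
  refine Finset.sum_congr rfl fun y _ => ?_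
  by_cases e : x + y = a
  · simp only [e, Prod.mk.injEq, Prod.ext_iff, true_and, if_true]
    rw [Finset.sum_eq_single t.1, Finset.sum_eq_single t.2]
    · simp; ring
    · intro b _ hb; simp [hb]
    · simp
    · intro b _ hb; simp [hb]
    · simp
  · simp [e]

lemma IsKer.concave {μ : Ω → ℝ} (h : IsDist μ) {X : Ω → α} {T : Ω → τ} {P : τ → ℝ}
    {f : τ → α → ℝ} (k : IsKer μ X T P f) : ∑ t, P t * ent (f t) ≤ ent (push X μ) := by
  rw [k.ent_sum]
  have := HH_subadd h X T
  change _ ≤ HH μ X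
  linarith

lemma IsKer.cap {μ : Ω → ℝ} (h : IsDist μ) {X : Ω → α} {T : Ω → τ} {P : τ → ℝ}
    {f : τ → α → ℝ} (k : IsKer μ X T P f) (φ : α → β) :
    ∑ t, P t * (ent (f t) - ent (push φ (f t))) ≤ ent (push X μ) - ent (push φ (push X μ)) := by
  have e1 := k.ent_sum
  have e2 := (k.map φ).ent_sum
  simp only [mul_sub, Finset.sum_sub_distrib]
  rw [e1, e2, push_push]
  have e3 := HH_cond_mono h X (fun ω => (φ (X ω), T ω)) (fun ω => φ (X ω))
    (fun ω ω' e => by simp only [Prod.mk.injEq] at e; exact e.1)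
  have e4 : HH μ (fun ω => (X ω, φ (X ω), T ω)) = HH μ (fun ω => (X ω, T ω)) :=
    HH_congr h.1 _ _ fun ω ω' => by
      simp only [Prod.mk.injEq]
      exact ⟨fun h => ⟨h.1, h.2.2⟩, fun h => ⟨h.1, by rw [h.1], h.2⟩⟩
  have e5 : HH μ (fun ω => (X ω, φ (X ω))) = HH μ X :=
    HH_congr h.1 _ _ fun ω ω' => by
      simp only [Prod.mk.injEq]
      exact ⟨fun h => h.1, fun h => ⟨h, by rw [h]⟩⟩
  have : ent (push X μ) = HH μ X := rfl
  have : ent (push (fun ω => φ (X ω)) μ) = HH μ (fun ω => φ (X ω)) := rfl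
  linarith

lemma isKer_trivial {p : α → ℝ} (hp : IsDist p) :
    IsKer p (fun a => a) (fun _ => ()) (fun _ => 1) (fun _ => p) := by
  classical
  refine ⟨by rw [isDist_iff]; simp, fun _ => hp, fun a t => ?_⟩
  rw [push_eq]
  simp

lemma IsKer.conv_le {μ : Ω → ℝ} (h : IsDist μ) {X : Ω → G} {T : Ω → τ} {P : τ → ℝ}
    {f : τ → G → ℝ} (k : IsKer μ X T P f) {p : G → ℝ} (hp : IsDist p) :
    ∑ t, P t * ent (conv p (f t)) ≤ ent (conv p (push X μ)) := by
  have := ((isKer_trivial hp).add k).concave (prodDist_isDist hp h)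
  rw [push_add p μ (fun a => a) X, push_id, Fintype.sum_prod_type] at this
  simpa [prodDist] using this

lemma IsKer.conv_sum {μ : Ω → ℝ} (h : IsDist μ) {X : Ω → G} {T : Ω → τ} {P : τ → ℝ}
    {f : τ → G → ℝ} (k : IsKer μ X T P f) {ν : Ω' → ℝ} (h' : IsDist ν)
    {Y : Ω' → G} {T' : Ω' → τ'} {Q : τ' → ℝ} {g : τ' → G → ℝ} (l : IsKer ν Y T' Q g) :
    ∑ t, ∑ t', P t * Q t' * ent (conv (f t) (g t')) =
      HH (prodDist μ ν) (fun ω => (X ω.1 + Y ω.2, (T ω.1, T' ω.2))) - (HH μ T + HH ν T') := by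
  rw [← HH_prod h h', ← (k.add l).ent_sum, Fintype.sum_prod_type]
  rfl

/-- Fibring inequality. -/
lemma fibring {μ : Ω → ℝ} (h : IsDist μ) {X X' : Ω → G} {T : Ω → τ} {P : τ → ℝ}
    {f : τ → G → ℝ} (k : IsKer μ X T P f) {ν : Ω' → ℝ} (h' : IsDist ν)
    {Y Y' : Ω' → G} {T' : Ω' → τ'} {Q : τ' → ℝ} {g : τ' → G → ℝ} (l : IsKer ν Y T' Q g)
    (hT : ∀ ω ω', T ω = T ω' → X ω + X' ω = X ω' + X' ω')
    (hT' : ∀ ω ω', T' ω = T' ω' → Y ω + Y' ω = Y ω' + Y' ω') :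
    ∑ t, ∑ t', P t * Q t' * ent (conv (f t) (g t')) ≤
      ent (conv (push X μ) (push Y ν)) + ent (conv (push X' μ) (push Y' ν))
      - ent (conv (push (fun ω => X ω + X' ω) μ) (push (fun ω => Y ω + Y' ω) ν)) := by
  have hd := prodDist_isDist h h'
  rw [k.conv_sum h h' l, ← HH_prod h h']
  have e1 := HH_cond_mono hd (fun ω : Ω × Ω' => X ω.1 + Y ω.2) (fun ω => (T ω.1, T' ω.2))
    (fun ω => (X ω.1 + X' ω.1) + (Y ω.2 + Y' ω.2)) (fun ω ω' e => by
      simp only [Prod.mk.injEq] at e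
      rw [hT _ _ e.1, hT' _ _ e.2])
  have e2 : HH (prodDist μ ν)
      (fun ω : Ω × Ω' => (X ω.1 + Y ω.2, (X ω.1 + X' ω.1) + (Y ω.2 + Y' ω.2))) ≤
      HH (prodDist μ ν) (fun ω : Ω × Ω' => (X ω.1 + Y ω.2, X' ω.1 + Y' ω.2)) :=
    HH_le hd.1 _ _ fun ω ω' e => by
      simp only [Prod.mk.injEq] at e ⊢
      refine ⟨e.1, ?_⟩
      rw [add_add_add_comm, add_add_add_comm (X ω'.1), e.1, e.2]
  have e3 := HH_subadd hd (fun ω : Ω × Ω' => X ω.1 + Y ω.2) (fun ω : Ω × Ω' => X' ω.1 + Y' ω.2)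
  simp only [HH] at e1 e2 e3 ⊢
  rw [push_add] at e3
  rw [push_add] at e3
  rw [push_add μ ν (fun ω => X ω + X' ω) (fun ω => Y ω + Y' ω)] at e1
  linarith

lemma HH_fst {μ : Ω → ℝ} {ν : Ω' → ℝ} (h' : IsDist ν) (X : Ω → α) :
    HH (prodDist μ ν) (fun ω : Ω × Ω' => X ω.1) = HH μ X := by
  unfold HH; rw [push_fst _ h']

lemma HH_snd {μ : Ω → ℝ} (h : IsDist μ) {ν : Ω' → ℝ} (X : Ω' → α) :
    HH (prodDist μ ν) (fun ω : Ω × Ω' => X ω.2) = HH ν X := by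
  unfold HH; rw [push_snd _ h]

lemma HH_prod_id {p q : G → ℝ} (hp : IsDist p) (hq : IsDist q) :
    HH (prodDist p q) (fun ω : G × G => (ω.1, ω.2)) = ent p + ent q := by
  rw [HH_prod hp hq (fun a => a) (fun a => a), ← ent_eq_HH, ← ent_eq_HH]

lemma HH_prod_add (p q : G → ℝ) :
    HH (prodDist p q) (fun ω : G × G => ω.1 + ω.2) = ent (conv p q) := by
  rw [conv_eq_push, HH]

/-- `H[X | X + Y] = H[X] + H[Y] - H[X + Y]`. -/
lemma IsKer.ent_sum_add {p q : G → ℝ} (hp : IsDist p) (hq : IsDist q) {P : G → ℝ} {f : G → G → ℝ}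
    (k : IsKer (prodDist p q) (fun ω : G × G => ω.1) (fun ω => ω.1 + ω.2) P f) :
    ∑ t, P t * ent (f t) = ent p + ent q - ent (conv p q) := by
  rw [k.ent_sum, HH_prod_add, ← HH_prod_id hp hq]
  congr 1
  refine HH_congr (prodDist_isDist hp hq).1 _ _ fun ω ω' => ?_
  simp only [Prod.mk.injEq]
  constructor
  · rintro ⟨a, b⟩; refine ⟨a, ?_⟩; rw [a] at b; exact add_left_cancel b
  · rintro ⟨a, b⟩; rw [a, b]; exact ⟨rfl, rfl⟩

lemma ent_le_conv {p q : G → ℝ} (hp : IsDist p) (hq : IsDist q) : ent p ≤ ent (conv p q) := by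
  have hd := prodDist_isDist hp hq
  have e1 := HH_cond_mono hd (fun ω : G × G => ω.1 + ω.2) (fun ω => ω.2) (fun _ => ())
    (fun _ _ _ => rfl)
  have e2 : HH (prodDist p q) (fun ω : G × G => (ω.1 + ω.2, ω.2)) = ent p + ent q := by
    rw [← HH_prod_id hp hq]
    refine HH_congr hd.1 _ _ fun ω ω' => ?_
    simp only [Prod.mk.injEq]
    constructor
    · rintro ⟨a, b⟩; refine ⟨?_, b⟩; rw [b] at a; exact add_right_cancel a
    · rintro ⟨a, b⟩; rw [a, b]; exact ⟨rfl, rfl⟩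
  have e3 : HH (prodDist p q) (fun ω : G × G => (ω.1 + ω.2, ())) = ent (conv p q) := by
    rw [← HH_prod_add]
    exact HH_congr hd.1 _ _ fun ω ω' => by simp
  have e4 := ent_const hd
  have e5 : HH (prodDist p q) (fun ω : G × G => ω.2) = ent q := by
    rw [HH_snd hp (fun a => a), ← ent_eq_HH]
  linarith

lemma ent_le_conv' {p q : G → ℝ} (hp : IsDist p) (hq : IsDist q) : ent q ≤ ent (conv p q) := by
  rw [conv_comm']; exact ent_le_conv hq hp

lemma conv_le_add {p q : G → ℝ} (hp : IsDist p) (hq : IsDist q) :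
    ent (conv p q) ≤ ent p + ent q := by
  rw [← HH_prod_id hp hq, ← HH_prod_add]
  exact HH_le (prodDist_isDist hp hq).1 _ _ fun ω ω' e => by
    simp only [Prod.mk.injEq] at e; rw [e.1, e.2]

/-- Kaimanovich and Vershik submodularity. -/
lemma KV {a b c : G → ℝ} (ha : IsDist a) (hb : IsDist b) (hc : IsDist c) :
    ent (conv a (conv b c)) + ent b ≤ ent (conv a b) + ent (conv b c) := by
  have hbc := prodDist_isDist hb hc
  have hd := prodDist_isDist ha hbc
  have e1 := HH_submod hd (fun ω : G × G × G => ω.1) (fun ω => ω.2.2)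
    (fun ω => ω.1 + (ω.2.1 + ω.2.2))
  have i0 : ∀ x : G → ℝ, HH x (fun a => a) = ent x := fun x => (ent_eq_HH x).symm
  have e2 : HH (prodDist a (prodDist b c))
      (fun ω : G × G × G => (ω.1, ω.2.2, ω.1 + (ω.2.1 + ω.2.2))) = ent a + (ent b + ent c) := by
    rw [← HH_prod_id hb hc, ← i0 a, ← HH_prod ha hbc (fun a => a) (fun a => (a.1, a.2))]
    refine HH_congr hd.1 _ _ fun ω ω' => ?_
    simp only [Prod.mk.injEq]
    constructor
    · rintro ⟨x, y, z⟩; rw [x, y] at z; exact ⟨x, add_right_cancel (add_left_cancel z), y⟩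
    · rintro ⟨x, y, z⟩; rw [x, y, z]; exact ⟨rfl, rfl, rfl⟩
  have e3 : HH (prodDist a (prodDist b c)) (fun ω : G × G × G => ω.1 + (ω.2.1 + ω.2.2))
      = ent (conv a (conv b c)) := by
    rw [HH, push_add a _ (fun a => a) (fun z : G × G => z.1 + z.2), push_id, ← conv_eq_push]
  have e4 : HH (prodDist a (prodDist b c)) (fun ω : G × G × G => (ω.1, ω.1 + (ω.2.1 + ω.2.2)))
      = ent a + ent (conv b c) := by
    rw [← HH_prod_add, ← i0 a, ← HH_prod ha hbc (fun a => a) (fun z => z.1 + z.2)]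
    refine HH_congr hd.1 _ _ fun ω ω' => ?_
    simp only [Prod.mk.injEq]
    constructor
    · rintro ⟨x, y⟩; rw [x] at y; exact ⟨x, add_left_cancel y⟩
    · rintro ⟨x, y⟩; rw [x, y]; exact ⟨rfl, rfl⟩
  have e5 : HH (prodDist a (prodDist b c)) (fun ω : G × G × G => (ω.2.2, ω.1 + (ω.2.1 + ω.2.2)))
      = ent c + ent (conv a b) := by
    have hab := prodDist_isDist ha hb
    rw [← HH_prod_add, ← i0 c, add_comm, ← HH_prod hab hc (fun z => z.1 + z.2) (fun a => a)]
    have l1 : HH (prodDist a (prodDist b c)) (fun ω : G × G × G => (ω.2.2, ω.1 + (ω.2.1 + ω.2.2)))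
      = HH (prodDist a (prodDist b c)) (fun ω : G × G × G => (ω.1 + ω.2.1, ω.2.2)) := by
      refine HH_congr hd.1 _ _ fun ω ω' => ?_
      simp only [Prod.mk.injEq]
      constructor
      · rintro ⟨x, y⟩; rw [x, ← add_assoc, ← add_assoc] at y; exact ⟨add_right_cancel y, x⟩
      · rintro ⟨x, y⟩; rw [← add_assoc, ← add_assoc, x, y]; exact ⟨rfl, rfl⟩
    rw [l1]
    unfold HH
    congr 1
    classical
    funext z
    rw [push_eq, push_eq, ← Equiv.sum_comp (Equiv.prodAssoc G G G)]
    refine Finset.sum_congr rfl fun ω _ => ?_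
    simp [prodDist, mul_assoc]
  linarith

lemma triangle {p q r : G → ℝ} (hp : IsDist p) (hq : IsDist q) (hr : IsDist r) :
    ent (conv p r) + ent q ≤ ent (conv p q) + ent (conv q r) := by
  have e1 := KV hp hq hr
  have e2 := ent_le_conv (conv_isDist hp hr) hq
  have e3 : conv (conv p r) q = conv p (conv q r) := by
    funext z
    classical
    simp only [conv_eq_push]
    have h1 := push_add (prodDist p r) q (fun z => z.1 + z.2) (fun a => a)
    have h2 := push_add p (prodDist q r) (fun a => a) (fun z => z.1 + z.2)
    simp only [push_id, conv_eq_push] at h1 h2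
    rw [← h1, ← h2, push_eq, push_eq, ← Equiv.sum_comp ((Equiv.prodAssoc G G G).trans
      (Equiv.prodCongr (Equiv.refl G) (Equiv.prodComm G G)))]
    refine Finset.sum_congr rfl fun ω _ => ?_
    have : ω.1.1 + ω.1.2 + ω.2 = ω.1.1 + (ω.2 + ω.1.2) := by abel
    simp [prodDist, this]
    split_ifs <;> ring
  rw [e3] at e2
  linarith

end ker

set_option linter.unusedSectionVars false
/-- Entropy of the projection to `G ⧸ V`. -/
def hQ {G : Type} [AddCommGroup G] [Module (ZMod 2) G] (V : Submodule (ZMod 2) G) (p : G → ℝ) : ℝ :=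
  ent (push V.mkQ p)

/-- Logarithm of the cardinality of a subspace. -/
def lc {G : Type} [AddCommGroup G] [Module (ZMod 2) G] (V : Submodule (ZMod 2) G) : ℝ :=
  Real.log (Nat.card V)

section quot
variable {G : Type} [AddCommGroup G] [Module (ZMod 2) G] [Finite G]

instance finite_quot (V : Submodule (ZMod 2) G) : Finite (G ⧸ V) :=
  Finite.of_surjective V.mkQ V.mkQ_surjective

instance finite_sub : Finite (Submodule (ZMod 2) G) :=
  Finite.of_injective (fun V : Submodule (ZMod 2) G => (V : Set G)) SetLike.coe_injective

lemma hQ_eq_HH (V : Submodule (ZMod 2) G) (p : G → ℝ) : hQ V p = HH p (fun x => V.mkQ x) := rfl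

lemma mkQ_eq_iff (V : Submodule (ZMod 2) G) (x y : G) : V.mkQ x = V.mkQ y ↔ x - y ∈ V := by
  rw [Submodule.mkQ_apply, Submodule.mkQ_apply, Submodule.Quotient.eq]

lemma hQ_mono {V W : Submodule (ZMod 2) G} (hVW : V ≤ W) {p : G → ℝ} (hp : IsDist p) :
    hQ W p ≤ hQ V p := by
  rw [hQ_eq_HH, hQ_eq_HH]
  refine HH_le hp.1 _ _ fun x y e => ?_
  rw [mkQ_eq_iff] at e ⊢
  exact hVW e

lemma hQ_bot {p : G → ℝ} (hp : IsDist p) : hQ ⊥ p = ent p := by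
  rw [hQ_eq_HH, ent_eq_HH]
  refine HH_congr hp.1 _ _ fun x y => ?_
  rw [mkQ_eq_iff, Submodule.mem_bot, sub_eq_zero]

lemma hQ_le (V : Submodule (ZMod 2) G) {p : G → ℝ} (hp : IsDist p) : hQ V p ≤ ent p := by
  rw [← hQ_bot hp]; exact hQ_mono bot_le hp

lemma hQ_nonneg (V : Submodule (ZMod 2) G) {p : G → ℝ} (hp : IsDist p) : 0 ≤ hQ V p :=
  ent_nonneg (push_isDist hp _)

lemma push_mkQ_conv (V : Submodule (ZMod 2) G) (p q : G → ℝ) :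
    push V.mkQ (conv p q) = conv (push V.mkQ p) (push V.mkQ q) :=
  push_conv V.mkQ.toAddMonoidHom p q

lemma hQ_quot (V : Submodule (ZMod 2) G) (W : Submodule (ZMod 2) (G ⧸ V)) {p : G → ℝ}
    (hp : IsDist p) : hQ W (push V.mkQ p) = hQ (W.comap V.mkQ) p := by
  unfold hQ
  rw [push_push]
  refine HH_congr hp.1 _ _ fun x y => ?_
  rw [mkQ_eq_iff, mkQ_eq_iff, Submodule.mem_comap, map_sub]

lemma lc_bot : lc (⊥ : Submodule (ZMod 2) G) = 0 := by
  simp [lc]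

lemma lc_nonneg (V : Submodule (ZMod 2) G) : 0 ≤ lc V :=
  Real.log_natCast_nonneg _

lemma lc_comap (V : Submodule (ZMod 2) G) (W : Submodule (ZMod 2) (G ⧸ V)) :
    lc (W.comap V.mkQ) = lc V + lc W := by
  have e : Nat.card (W.comap V.mkQ) = Nat.card V * Nat.card W := by
    have h1 := Submodule.card_eq_card_quotient_mul_card (W.comap V.mkQ)
    have h2 := Submodule.card_eq_card_quotient_mul_card V
    have h3 := Submodule.card_eq_card_quotient_mul_card W
    have h4 : Nat.card (G ⧸ (W.comap V.mkQ)) = Nat.card ((G ⧸ V) ⧸ W) := by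
      have l : (G ⧸ (W.comap V.mkQ)) ≃ₗ[ZMod 2] ((G ⧸ V) ⧸ W) := by
        refine (Submodule.quotEquivOfEq _ (LinearMap.ker (W.mkQ.comp V.mkQ)) ?_).trans
          (LinearMap.quotKerEquivOfSurjective _ ?_)
        · rw [LinearMap.ker_comp, Submodule.ker_mkQ]
        · rw [LinearMap.coe_comp]
          exact (Submodule.mkQ_surjective _).comp (Submodule.mkQ_surjective _)
      exact Nat.card_congr l.toEquiv
    have h5 : 0 < Nat.card ((G ⧸ V) ⧸ W) := Nat.card_pos
    rw [h4] at h1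
    rw [h3, h1] at h2
    apply Nat.eq_of_mul_eq_mul_left h5
    nlinarith
  have a : (0:ℝ) < Nat.card V := by exact_mod_cast Nat.card_pos
  have b : (0:ℝ) < Nat.card W := by exact_mod_cast Nat.card_pos
  unfold lc
  rw [e, Nat.cast_mul, Real.log_mul a.ne' b.ne']

/-- Adding independent noise only increases the entropy carried by fibres. -/
lemma fibre_conv {V W : Submodule (ZMod 2) G} (hVW : V ≤ W) {p q : G → ℝ} (hp : IsDist p)
    (hq : IsDist q) : hQ V q - hQ W q ≤ hQ V (conv p q) - hQ W (conv p q) := by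
  have hd := prodDist_isDist hp hq
  have e1 := HH_cond_mono hd (fun ω : G × G => V.mkQ (ω.1 + ω.2)) (fun ω => (ω.1, W.mkQ ω.2))
    (fun ω => W.mkQ (ω.1 + ω.2)) (fun ω ω' e => by
      simp only [Prod.mk.injEq] at e
      rw [map_add, map_add, e.1, e.2])
  have e2 : HH (prodDist p q) (fun ω : G × G => (V.mkQ (ω.1 + ω.2), ω.1, W.mkQ ω.2))
      = ent p + hQ V q := by
    rw [hQ_eq_HH, ent_eq_HH, ← HH_prod hp hq]
    refine HH_congr hd.1 _ _ fun ω ω' => ?_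
    simp only [Prod.mk.injEq]
    constructor
    · rintro ⟨a, b, c⟩
      rw [map_add, map_add, b] at a
      exact ⟨b, add_left_cancel a⟩
    · rintro ⟨a, b⟩
      refine ⟨by rw [map_add, map_add, a, b], a, ?_⟩
      rw [mkQ_eq_iff] at b ⊢
      exact hVW b
  have e3 : HH (prodDist p q) (fun ω : G × G => (ω.1, W.mkQ ω.2)) = ent p + hQ W q := by
    rw [hQ_eq_HH, ent_eq_HH, ← HH_prod hp hq]
  have e4 : ∀ U : Submodule (ZMod 2) G, HH (prodDist p q) (fun ω : G × G => U.mkQ (ω.1 + ω.2))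
      = hQ U (conv p q) := by
    intro U
    rw [conv_eq_push, hQ, push_push]; rfl
  have e5 : HH (prodDist p q) (fun ω : G × G => (V.mkQ (ω.1 + ω.2), W.mkQ (ω.1 + ω.2)))
      = hQ V (conv p q) := by
    rw [← e4]
    refine HH_congr hd.1 _ _ fun ω ω' => ?_
    simp only [Prod.mk.injEq]
    refine ⟨fun h => h.1, fun h => ⟨h, ?_⟩⟩
    rw [mkQ_eq_iff] at h ⊢
    exact hVW h
  have e6 := e4 W
  linarith

lemma fibre_conv' {V W : Submodule (ZMod 2) G} (hVW : V ≤ W) {p q : G → ℝ} (hp : IsDist p)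
    (hq : IsDist q) : hQ V p - hQ W p ≤ hQ V (conv p q) - hQ W (conv p q) := by
  rw [conv_comm']; exact fibre_conv hVW hq hp

lemma hQ_le_conv (V : Submodule (ZMod 2) G) {p q : G → ℝ} (hp : IsDist p) (hq : IsDist q) :
    hQ V p ≤ hQ V (conv p q) := by
  cases nonempty_fintype (G ⧸ V)
  rw [hQ, hQ, push_mkQ_conv]
  exact ent_le_conv (push_isDist hp _) (push_isDist hq _)

lemma hQ_conv_le_add (V : Submodule (ZMod 2) G) {p q : G → ℝ} (hp : IsDist p) (hq : IsDist q) :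
    hQ V (conv p q) ≤ hQ V p + hQ V q := by
  cases nonempty_fintype (G ⧸ V)
  rw [hQ, hQ, hQ, push_mkQ_conv]
  exact conv_le_add (push_isDist hp _) (push_isDist hq _)

end quot

/-- The inequality `s[X;Y] ≤ η (H[X] + H[Y])` for all `κ`-rigid pairs. -/
def PA (η κ : ℝ) : Prop :=
  ∀ (G : Type) [AddCommGroup G] [Module (ZMod 2) G] [Finite G] (p q : G → ℝ), IsDist p → IsDist q →
    (∀ V : Submodule (ZMod 2) G, (ent p - hQ V p) + (ent q - hQ V q) ≤ κ * lc V) →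
    ent p + ent q - ent (conv p q) ≤ η * (ent p + ent q)

lemma PA_relB {η κ : ℝ} (h : PA η κ) {G : Type} [AddCommGroup G] [Module (ZMod 2) G] [Finite G]
    (V₀ : Submodule (ZMod 2) G) {p q : G → ℝ} (hp : IsDist p) (hq : IsDist q) :
    ∃ V : Submodule (ZMod 2) G, V₀ ≤ V ∧
      κ * (lc V - lc V₀) ≤ hQ V₀ p + hQ V₀ q - hQ V p - hQ V q ∧
      hQ V p + hQ V q - hQ V (conv p q) ≤ η * (hQ V p + hQ V q) := by
  obtain ⟨V, hV, hmin⟩ := Set.exists_min_image {V : Submodule (ZMod 2) G | V₀ ≤ V}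
    (fun V => hQ V p + hQ V q + κ * lc V) (Set.toFinite _) ⟨V₀, le_refl V₀⟩
  refine ⟨V, hV, ?_, ?_⟩
  · have := hmin V₀ (le_refl V₀)
    linarith
  · have := h (G ⧸ V) (push V.mkQ p) (push V.mkQ q) (push_isDist hp _) (push_isDist hq _) ?_
    · rw [← push_mkQ_conv] at this
      exact this
    · intro W
      rw [hQ_quot V W hp, hQ_quot V W hq]
      have h1 := hmin (W.comap V.mkQ) (le_trans hV (Submodule.le_comap_mkQ V W))
      simp only [lc_comap] at h1
      change (hQ V p - _) + (hQ V q - _) ≤ _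
      linarith

set_option linter.unusedSectionVars false
section endgame
variable {G : Type} [AddCommGroup G] [Module (ZMod 2) G] [Fintype G]

/-- Four independent copies of a variable. -/
def mu4 (z : G → ℝ) : (G × G) × (G × G) → ℝ := prodDist (prodDist z z) (prodDist z z)

/-- `Z₁ + Z₂`. -/
def eU (ω : (G × G) × (G × G)) : G := ω.1.1 + ω.1.2
/-- `Z₃ + Z₄`. -/
def eU' (ω : (G × G) × (G × G)) : G := ω.2.1 + ω.2.2
/-- `Z₁ + Z₃`. -/
def eT (ω : (G × G) × (G × G)) : G := ω.1.1 + ω.2.1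
/-- `Z₂ + Z₃`. -/
def eW (ω : (G × G) × (G × G)) : G := ω.1.2 + ω.2.1
/-- `Z₁ + Z₂ + Z₃ + Z₄`. -/
def eS (ω : (G × G) × (G × G)) : G := eU ω + eU' ω

lemma mu4_isDist {z : G → ℝ} (hz : IsDist z) : IsDist (mu4 z) :=
  prodDist_isDist (prodDist_isDist hz hz) (prodDist_isDist hz hz)

lemma push_eU {z : G → ℝ} (hz : IsDist z) : push eU (mu4 z) = conv z z := by
  rw [conv_eq_push, ← push_fst (prodDist z z) (prodDist_isDist hz hz)]; rfl

lemma push_eU' {z : G → ℝ} (hz : IsDist z) : push eU' (mu4 z) = conv z z := by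
  rw [conv_eq_push, ← push_snd (prodDist z z) (prodDist_isDist hz hz)]; rfl

lemma push_eS (z : G → ℝ) : push eS (mu4 z) = conv (conv z z) (conv z z) := by
  have := push_add (prodDist z z) (prodDist z z) (fun ω => ω.1 + ω.2) (fun ω => ω.1 + ω.2)
  rw [← conv_eq_push] at this
  exact this

lemma HH_eUS {z : G → ℝ} (hz : IsDist z) :
    HH (mu4 z) (fun ω => (eU ω, eS ω)) = 2 * ent (conv z z) := by
  have hd := prodDist_isDist hz hz
  have h1 := HH_prod hd hd (fun ω => ω.1 + ω.2) (fun ω => ω.1 + ω.2)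
  rw [HH_prod_add] at h1
  have h2 : HH (mu4 z) (fun ω => (eU ω, eS ω)) = HH (mu4 z) (fun ω => (eU ω, eU' ω)) := by
    refine HH_congr (mu4_isDist hz).1 _ _ fun ω ω' => ?_
    simp only [Prod.mk.injEq, eS]
    constructor
    · rintro ⟨a, b⟩; rw [a] at b; exact ⟨a, add_left_cancel b⟩
    · rintro ⟨a, b⟩; rw [a, b]; exact ⟨rfl, rfl⟩
  rw [h2, two_mul]
  exact h1

lemma HH_eTS {z : G → ℝ} (hz : IsDist z) :
    HH (mu4 z) (fun ω => (eT ω, eS ω)) = 2 * ent (conv z z) := by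
  rw [← HH_eUS hz]
  let σ : (G × G) × (G × G) ≃ (G × G) × (G × G) :=
    ⟨fun ω => ((ω.1.1, ω.2.1), (ω.1.2, ω.2.2)), fun ω => ((ω.1.1, ω.2.1), (ω.1.2, ω.2.2)),
      fun _ => rfl, fun _ => rfl⟩
  rw [← HH_equiv (mu4 z) σ (fun ω => by simp only [σ, mu4, prodDist, Equiv.coe_fn_mk]; ring)
    (fun ω => (eU ω, eS ω))]
  congr 1
  funext ω
  simp only [σ, Equiv.coe_fn_mk, eU, eS, eU', eT, Prod.mk.injEq, true_and]
  abel

lemma HH_eWS {z : G → ℝ} (hz : IsDist z) :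
    HH (mu4 z) (fun ω => (eW ω, eS ω)) = 2 * ent (conv z z) := by
  rw [← HH_eTS hz]
  let σ : (G × G) × (G × G) ≃ (G × G) × (G × G) :=
    ⟨fun ω => ((ω.1.2, ω.1.1), (ω.2.1, ω.2.2)), fun ω => ((ω.1.2, ω.1.1), (ω.2.1, ω.2.2)),
      fun _ => rfl, fun _ => rfl⟩
  rw [← HH_equiv (mu4 z) σ (fun ω => by simp only [σ, mu4, prodDist, Equiv.coe_fn_mk]; ring)
    (fun ω => (eT ω, eS ω))]
  congr 1
  funext ω
  simp only [σ, Equiv.coe_fn_mk, eU, eS, eU', eT, eW, Prod.mk.injEq, true_and]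
  abel

lemma eT_eq (ω : (G × G) × (G × G)) : eT ω = eU ω + eW ω := by
  have := ZModModule.add_self ω.1.2
  simp only [eT, eU, eW]
  rw [add_assoc, ← add_assoc ω.1.2, this, zero_add]

/-- The conditional mutual information of the endgame. -/
def eI (z : G → ℝ) : ℝ := 4 * ent (conv z z) - HH (mu4 z) (fun ω => (eU ω, (eS ω, eW ω)))
  - ent (conv (conv z z) (conv z z))

lemma eI_kernel {z : G → ℝ} (hz : IsDist z) {Q : G → ℝ} {k : G → G → ℝ}
    (hk : IsKer (prodDist z z) (fun ω : G × G => ω.1) (fun ω => ω.1 + ω.2) Q k) :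
    ∑ t, ∑ t', Q t * Q t' * ent (conv (k t) (k t'))
      = 2 * ent (conv z z) - ent (conv (conv z z) (conv z z)) - eI z := by
  have hd := prodDist_isDist hz hz
  rw [hk.conv_sum hd hd hk, HH_prod_add]
  have : HH (prodDist (prodDist z z) (prodDist z z)) (fun ω : (G × G) × (G × G) =>
      (ω.1.1 + ω.2.1, (ω.1.1 + ω.1.2, ω.2.1 + ω.2.2)))
      = HH (mu4 z) (fun ω => (eU ω, (eS ω, eW ω))) := by
    refine HH_congr (mu4_isDist hz).1 _ _ fun ω ω' => ?_
    have e1 : ω.1.1 + ω.2.1 = eU ω + eW ω := eT_eq ω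
    have e2 : ω'.1.1 + ω'.2.1 = eU ω' + eW ω' := eT_eq ω'
    have e3 : ω.2.1 + ω.2.2 = eS ω - eU ω := by simp [eS, eU']
    have e4 : ω'.2.1 + ω'.2.2 = eS ω' - eU ω' := by simp [eS, eU']
    have e5 : ω.1.1 + ω.1.2 = eU ω := rfl
    have e6 : ω'.1.1 + ω'.1.2 = eU ω' := rfl
    simp only [Prod.mk.injEq]
    rw [e1, e2, e3, e4, e5, e6]
    constructor
    · rintro ⟨a, b, c⟩
      rw [b] at a c
      exact ⟨b, sub_left_injective c, add_left_cancel a⟩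
    · rintro ⟨a, b, c⟩
      rw [a, b, c]; exact ⟨rfl, rfl, rfl⟩
  rw [this, eI]; ring

lemma endgame {z : G → ℝ} (hz : IsDist z) {P : G × G → ℝ} {f : G × G → G → ℝ}
    (k : IsKer (mu4 z) eU (fun ω => (eS ω, eW ω)) P f) :
    ∑ t, P t * ent (f t) = 2 * ent (conv z z) - ent (conv (conv z z) (conv z z)) - eI z ∧
    ∑ t, P t * (ent (conv (f t) (f t)) - ent (f t)) ≤ 3 * eI z ∧
    ∑ t, ∑ t', P t * P t' * ent (conv (f t) (f t')) ≤
      2 * ent (conv (conv z z) (conv z z)) -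
      ent (conv (conv (conv z z) (conv z z)) (conv (conv z z) (conv z z))) := by
  have hm := mu4_isDist hz
  have hSW : HH (mu4 z) (fun ω => (eS ω, eW ω)) = 2 * ent (conv z z) := by
    rw [← HH_eWS hz]
    exact HH_congr hm.1 _ _ fun ω ω' => by simp [and_comm]
  have i1 : ∑ t, P t * ent (f t)
      = 2 * ent (conv z z) - ent (conv (conv z z) (conv z z)) - eI z := by
    rw [k.ent_sum, hSW, eI]; ring
  refine ⟨i1, ?_, ?_⟩
  · -- the coupling
    let lam : (G × G) × (G × G) → ℝ := fun ω => P ω.2 * prodDist (f ω.2) (f ω.2) ω.1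
    have kl : IsKer lam (fun ω => ω.1) (fun ω => ω.2) P (fun t => prodDist (f t) (f t)) := by
      refine ⟨k.distP, fun t => prodDist_isDist (k.distf t) (k.distf t), fun a t => ?_⟩
      have : push (fun ω : (G × G) × (G × G) => (ω.1, ω.2)) lam = lam := push_id lam
      rw [this]
    have hl : IsDist lam := by
      rw [isDist_iff]
      refine ⟨fun ω => mul_nonneg (k.distP.1 _)
        ((prodDist_isDist (k.distf _) (k.distf _)).1 _), ?_⟩
      rw [Fintype.sum_prod_type_right]
      simp only [lam, ← Finset.mul_sum]
      rw [← ((isDist_iff _).1 k.distP).2]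
      refine Finset.sum_congr rfl fun t _ => ?_
      rw [((isDist_iff _).1 (prodDist_isDist (k.distf t) (k.distf t))).2, mul_one]
    have k1 : IsKer lam (fun ω => ω.1.1) (fun ω => ω.2) P f := by
      have h := kl.map (fun z => z.1)
      have e : (fun t => push (fun z : G × G => z.1) (prodDist (f t) (f t))) = f := by
        funext t
        rw [push_fst _ (k.distf t) (fun a => a), push_id]
      rw [e] at h; exact h
    have k2 : IsKer lam (fun ω => ω.1.2) (fun ω => ω.2) P f := by
      have h := kl.map (fun z => z.2)
      have e : (fun t => push (fun z : G × G => z.2) (prodDist (f t) (f t))) = f := by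
        funext t
        rw [push_snd _ (k.distf t) (fun a => a), push_id]
      rw [e] at h; exact h
    have k3 : IsKer lam (fun ω => ω.1.1 + ω.1.2) (fun ω => ω.2) P
        (fun t => conv (f t) (f t)) := by
      have h := kl.map (fun z => z.1 + z.2)
      simp only [← conv_eq_push] at h; exact h
    have t1 : ∀ (F : G × (G × G) → G × G), HH lam (fun ω => F (ω.1.1, ω.2))
        = HH (mu4 z) (fun ω => F (eU ω, (eS ω, eW ω))) := by
      intro F
      unfold HH
      rw [← push_push F (fun ω : (G × G) × (G × G) => (ω.1.1, ω.2)), k1.push_eq',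
        ← push_push F (fun ω => (eU ω, (eS ω, eW ω))), k.push_eq']
    have t2 : ∀ (F : G × (G × G) → G × G), HH lam (fun ω => F (ω.1.2, ω.2))
        = HH (mu4 z) (fun ω => F (eU ω, (eS ω, eW ω))) := by
      intro F
      unfold HH
      rw [← push_push F (fun ω : (G × G) × (G × G) => (ω.1.2, ω.2)), k2.push_eq',
        ← push_push F (fun ω => (eU ω, (eS ω, eW ω))), k.push_eq']
    have hTS : HH (mu4 z) (fun ω => (eU ω + eW ω, eS ω)) = 2 * ent (conv z z) := by
      rw [← HH_eTS hz]; simp only [eT_eq]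
    have a1 : HH lam (fun ω => (ω.1.1, ω.2.1)) = 2 * ent (conv z z) := by
      rw [← HH_eUS hz]; exact t1 (fun x => (x.1, x.2.1))
    have a2 : HH lam (fun ω => (ω.1.2, ω.2.1)) = 2 * ent (conv z z) := by
      rw [← HH_eUS hz]; exact t2 (fun x => (x.1, x.2.1))
    have b1 : HH lam (fun ω => (ω.1.1 + ω.2.2, ω.2.1)) = 2 * ent (conv z z) := by
      rw [← hTS]; exact t1 (fun x => (x.1 + x.2.2, x.2.1))
    have b2 : HH lam (fun ω => (ω.1.2 + ω.2.2, ω.2.1)) = 2 * ent (conv z z) := by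
      rw [← hTS]; exact t2 (fun x => (x.1 + x.2.2, x.2.1))
    have c0 : HH lam (fun ω => ω.2) = 2 * ent (conv z z) := by
      rw [← hSW]; exact t1 (fun x => x.2)
    have c1 : HH lam (fun ω => ω.2.1) = ent (conv (conv z z) (conv z z)) := by
      rw [← push_eS]
      have := t1 (fun x => (x.2.1, x.2.1))
      have r1 : HH lam (fun ω => (ω.2.1, ω.2.1)) = HH lam (fun ω => ω.2.1) :=
        HH_congr hl.1 _ _ fun _ _ => by simp
      have r2 : HH (mu4 z) (fun ω => (eS ω, eS ω)) = HH (mu4 z) (fun ω => eS ω) :=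
        HH_congr hm.1 _ _ fun _ _ => by simp
      rw [r1, r2] at this
      exact this
    have d0 : HH lam (fun ω => (ω.1, ω.2)) = 2 * ent (conv z z) + 2 * ∑ t, P t * ent (f t) := by
      have := kl.ent_sum
      rw [c0] at this
      have e : ∑ t, P t * ent (prodDist (f t) (f t)) = 2 * ∑ t, P t * ent (f t) := by
        rw [Finset.mul_sum]
        refine Finset.sum_congr rfl fun t _ => ?_
        rw [ent_prodDist (k.distf t) (k.distf t)]; ring
      linarith
    have s1 := HH_submod hl (fun ω => ω.1.1) (fun ω => ω.1.1 + ω.2.2)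
      (fun ω => (ω.1.1 + ω.1.2 + ω.2.2, ω.2.1))
    have s2 := HH_submod hl (fun ω => ω.1.1) (fun ω => ω.1.2 + ω.2.2) (fun ω => ω.2.1)
    have s3 := HH_submod hl (fun ω => ω.1.1 + ω.2.2) (fun ω => ω.1.2) (fun ω => ω.2.1)
    have s4 := HH_cond_mono hl (fun ω => ω.1.1 + ω.1.2 + ω.2.2) (fun ω => ω.2) (fun ω => ω.2.1)
      (fun ω ω' e => by rw [e])
    have g1 : HH lam (fun ω => (ω.1.1, ω.1.1 + ω.2.2, (ω.1.1 + ω.1.2 + ω.2.2, ω.2.1)))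
        = HH lam (fun ω => (ω.1, ω.2)) := by
      refine HH_congr hl.1 _ _ fun ω ω' => ?_
      simp only [Prod.ext_iff]
      constructor <;> (intro h; grind)
    have g2 : HH lam (fun ω => (ω.1.1, (ω.1.1 + ω.1.2 + ω.2.2, ω.2.1)))
        = HH lam (fun ω => (ω.1.1, ω.1.2 + ω.2.2, ω.2.1)) := by
      refine HH_congr hl.1 _ _ fun ω ω' => ?_
      simp only [Prod.ext_iff]
      constructor <;> (intro h; grind)
    have g3 : HH lam (fun ω => (ω.1.1 + ω.2.2, (ω.1.1 + ω.1.2 + ω.2.2, ω.2.1)))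
        = HH lam (fun ω => (ω.1.1 + ω.2.2, ω.1.2, ω.2.1)) := by
      refine HH_congr hl.1 _ _ fun ω ω' => ?_
      simp only [Prod.ext_iff]
      constructor <;> (intro h; grind)
    have g4 : HH lam (fun ω => (ω.1.1 + ω.1.2 + ω.2.2, ω.2))
        = HH lam (fun ω => (ω.1.1 + ω.1.2, ω.2)) := by
      refine HH_congr hl.1 _ _ fun ω ω' => ?_
      simp only [Prod.ext_iff]
      constructor <;> (intro h; grind)
    have fin := k3.ent_sum
    simp only [mul_sub, Finset.sum_sub_distrib]
    linarith
  · have := fibring hm k (X' := eU') hm k (Y' := eU')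
      (fun ω ω' e => (Prod.mk.inj e).1) (fun ω ω' e => (Prod.mk.inj e).1)
    rw [push_eU hz, push_eU' hz] at this
    have e : push (fun ω => eU ω + eU' ω) (mu4 z) = conv (conv z z) (conv z z) := push_eS z
    rw [e] at this
    linarith

end endgame

set_option linter.unusedSectionVars false
section lemC
variable {Ω τ τ' G : Type} [Fintype Ω] [Fintype τ] [Fintype τ'] [AddCommGroup G]
  [Module (ZMod 2) G] [Fintype G]

lemma lemC_pt {η κ' δ : ℝ} (h : PA η κ') (hκ : 0 < κ') (hδ : 0 < δ) (hη : 0 ≤ η) {g : G → ℝ}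
    (hg : IsDist g) : ∃ V : Submodule (ZMod 2) G, δ * κ' / 2 * lc V ≤ ent g ∧
      ∀ f : G → ℝ, IsDist f → ent f + ent g - ent (conv f g) ≤
        (ent f - hQ V f) + (η + δ / 2) * (ent f + ent g) := by
  obtain ⟨V, hV⟩ := Finite.exists_max
    (fun V : Submodule (ZMod 2) G => - hQ V g - δ * κ' / 2 * lc V)
  refine ⟨V, ?_, fun f hf => ?_⟩
  · have := hV ⊥
    simp only [hQ_bot hg, lc_bot] at this
    have := hQ_nonneg V hg
    linarith
  · obtain ⟨W, hW, h1, h2⟩ := PA_relB h V hf hg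
    have e1 := fibre_conv (bot_le : ⊥ ≤ V) hf hg
    rw [hQ_bot hg, hQ_bot (conv_isDist hf hg)] at e1
    have e2 := fibre_conv' hW hf hg
    have e3 := hV W
    have a1 := hQ_le V hf
    have a2 := hQ_le V hg
    have a3 := hQ_le W hf
    have a4 := hQ_le W hg
    have a5 := hQ_nonneg W hf
    have a6 := hQ_nonneg W hg
    have e4 : κ' * (lc W - lc V) ≤ ent f + ent g := by linarith
    have e5 : δ / 2 * (κ' * (lc W - lc V)) ≤ δ / 2 * (ent f + ent g) :=
      mul_le_mul_of_nonneg_left e4 (by linarith)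
    have e6 : η * (hQ W f + hQ W g) ≤ η * (ent f + ent g) :=
      mul_le_mul_of_nonneg_left (by linarith) hη
    nlinarith

lemma sum_fst {P : τ → ℝ} {Q : τ' → ℝ} (hQ : IsDist Q) (F : τ → ℝ) :
    ∑ t, ∑ w, P t * Q w * F t = ∑ t, P t * F t := by
  refine Finset.sum_congr rfl fun t _ => ?_
  have : ∀ w, P t * Q w * F t = (P t * F t) * Q w := fun w => by ring
  simp only [this]
  rw [← Finset.mul_sum, ((isDist_iff _).1 hQ).2, mul_one]

lemma sum_snd {P : τ → ℝ} {Q : τ' → ℝ} (hP : IsDist P) (F : τ' → ℝ) :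
    ∑ t, ∑ w, P t * Q w * F w = ∑ w, Q w * F w := by
  rw [Finset.sum_comm]
  refine Finset.sum_congr rfl fun w _ => ?_
  have : ∀ t, P t * Q w * F w = (Q w * F w) * P t := fun t => by ring
  simp only [this]
  rw [← Finset.mul_sum, ((isDist_iff _).1 hP).2, mul_one]

lemma sum_mono2 {P : τ → ℝ} {Q : τ' → ℝ} (hP : IsDist P) (hQ : IsDist Q) {F F' : τ → τ' → ℝ}
    (h : ∀ t w, F t w ≤ F' t w) :
    ∑ t, ∑ w, P t * Q w * F t w ≤ ∑ t, ∑ w, P t * Q w * F' t w :=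
  Finset.sum_le_sum fun t _ => Finset.sum_le_sum fun w _ =>
    mul_le_mul_of_nonneg_left (h t w) (mul_nonneg (hP.1 t) (hQ.1 w))

lemma lemC {η κ' δ : ℝ} (h : PA η κ') (hκ : 0 < κ') (hδ : 0 < δ) (hη : 0 ≤ η)
    {μ : Ω → ℝ} (hμ : IsDist μ) {X : Ω → G} {T : Ω → τ} {P : τ → ℝ} {f : τ → G → ℝ}
    (k : IsKer μ X T P f)
    (hr : ∀ V : Submodule (ZMod 2) G,
      ent (push X μ) - hQ V (push X μ) ≤ δ ^ 2 * κ' / 4 * lc V)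
    {Q : τ' → ℝ} {g : τ' → G → ℝ} (hQ' : IsDist Q) (hg : ∀ w, IsDist (g w)) :
    ∑ t, ∑ w, P t * Q w * (ent (f t) + ent (g w) - ent (conv (f t) (g w))) ≤
      (η + δ) * (∑ t, P t * ent (f t) + ∑ w, Q w * ent (g w)) := by
  have hex := fun w => lemC_pt h hκ hδ hη (hg w)
  choose V hV1 hV2 using hex
  have e1 := sum_mono2 k.distP hQ' (fun t w => hV2 w (f t) (k.distf t))
  have e2 : ∑ t, ∑ w, P t * Q w * ((ent (f t) - hQ (V w) (f t))
      + (η + δ / 2) * (ent (f t) + ent (g w))) =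
      ∑ w, Q w * (∑ t, P t * (ent (f t) - hQ (V w) (f t)))
      + (η + δ / 2) * (∑ t, P t * ent (f t) + ∑ w, Q w * ent (g w)) := by
    rw [← sum_fst (P := P) hQ' (fun t => ent (f t)),
      ← sum_snd (Q := Q) k.distP (fun w => ent (g w)), ← Finset.sum_add_distrib,
      Finset.mul_sum]
    have : ∑ w, Q w * (∑ t, P t * (ent (f t) - hQ (V w) (f t)))
      = ∑ t, ∑ w, P t * Q w * (ent (f t) - hQ (V w) (f t)) := by
      rw [Finset.sum_comm]
      refine Finset.sum_congr rfl fun w _ => ?_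
      rw [Finset.mul_sum]
      refine Finset.sum_congr rfl fun t _ => ?_
      ring
    rw [this, ← Finset.sum_add_distrib]
    refine Finset.sum_congr rfl fun t _ => ?_
    rw [← Finset.sum_add_distrib, Finset.mul_sum, ← Finset.sum_add_distrib]
    refine Finset.sum_congr rfl fun w _ => ?_
    ring
  have e3 : ∑ w, Q w * (∑ t, P t * (ent (f t) - hQ (V w) (f t)))
      ≤ ∑ w, Q w * (δ / 2 * ent (g w)) := by
    refine Finset.sum_le_sum fun w _ => mul_le_mul_of_nonneg_left ?_ (hQ'.1 w)
    have := k.cap hμ (V w).mkQ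
    have h2 := hr (V w)
    have h3 := mul_le_mul_of_nonneg_left (hV1 w) (by linarith : 0 ≤ δ / 2)
    unfold hQ at h2 ⊢
    nlinarith
  have e4 : ∑ w, Q w * (δ / 2 * ent (g w)) = δ / 2 * ∑ w, Q w * ent (g w) := by
    rw [Finset.mul_sum]
    exact Finset.sum_congr rfl fun w _ => by ring
  have e5 : 0 ≤ ∑ t, P t * ent (f t) :=
    Finset.sum_nonneg fun t _ => mul_nonneg (k.distP.1 t) (ent_nonneg (k.distf t))
  nlinarith

end lemC

set_option linter.unusedSectionVars false
section pfr
variable {τ τ' G : Type} [Fintype τ] [Fintype τ'] [AddCommGroup G]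
  [Module (ZMod 2) G] [Fintype G]

/-- The functional to minimise. -/
def tauF (p a b : G → ℝ) : ℝ := dRuzsa a b + (1 / 32) * (dRuzsa p a + dRuzsa p b)

lemma continuous_ent : Continuous (fun p : G → ℝ => ent p) := by
  simp only [ent_eq]
  exact continuous_finsetSum _ fun a _ =>
    Real.continuous_negMulLog.comp (continuous_apply a)

lemma continuous_conv : Continuous (fun z : (G → ℝ) × (G → ℝ) => conv z.1 z.2) := by
  refine continuous_pi fun c => ?_
  simp only [conv, finsum_eq_sum_of_fintype]
  exact continuous_finsetSum _ fun a _ =>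
    ((continuous_apply a).comp continuous_fst).mul ((continuous_apply (c - a)).comp continuous_snd)

lemma exists_min_tau {p : G → ℝ} (hp : IsDist p) : ∃ x y : G → ℝ, IsDist x ∧ IsDist y ∧
    ∀ a b, IsDist a → IsDist b → tauF p x y ≤ tauF p a b := by
  have hc : Continuous (fun z : (G → ℝ) × (G → ℝ) => tauF p z.1 z.2) := by
    unfold tauF dRuzsa
    have c1 := continuous_ent.comp (continuous_conv (G := G))
    have c2 := (continuous_ent (G := G)).comp (continuous_fst (X := G → ℝ) (Y := G → ℝ))
    have c3 := (continuous_ent (G := G)).comp (continuous_snd (X := G → ℝ) (Y := G → ℝ))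
    have c4 : Continuous (fun z : (G → ℝ) × (G → ℝ) => ent (conv p z.1)) :=
      c1.comp (continuous_const.prodMk continuous_fst)
    have c5 : Continuous (fun z : (G → ℝ) × (G → ℝ) => ent (conv p z.2)) :=
      c1.comp (continuous_const.prodMk continuous_snd)
    simp only [Function.comp_def] at c1 c2 c3
    fun_prop
  have hmem : ∀ a : G → ℝ, a ∈ stdSimplex ℝ G ↔ IsDist a := fun a => by
    rw [isDist_iff]; rfl
  obtain ⟨z, hz, hmin⟩ := ((isCompact_stdSimplex ℝ G).prod (isCompact_stdSimplex ℝ G)).exists_isMinOn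
    ⟨(p, p), (hmem p).2 hp, (hmem p).2 hp⟩ hc.continuousOn
  exact ⟨z.1, z.2, (hmem _).1 hz.1, (hmem _).1 hz.2, fun a b ha hb =>
    hmin (Set.mk_mem_prod ((hmem a).2 ha) ((hmem b).2 hb))⟩

lemma avg_min {p : G → ℝ} {c : ℝ} (hmin : ∀ a b, IsDist a → IsDist b → c ≤ tauF p a b)
    {P : τ → ℝ} {f : τ → G → ℝ} {Q : τ' → ℝ} {g : τ' → G → ℝ} (hP : IsDist P)
    (hf : ∀ t, IsDist (f t)) (hQ : IsDist Q) (hg : ∀ t, IsDist (g t)) :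
    c ≤ ∑ t, ∑ w, P t * Q w * ent (conv (f t) (g w)) - (∑ t, P t * ent (f t)) / 2
      - (∑ w, Q w * ent (g w)) / 2
      + (1 / 32) * ((∑ t, P t * ent (conv p (f t)) - ent p / 2 - (∑ t, P t * ent (f t)) / 2)
        + (∑ t, Q t * ent (conv p (g t)) - ent p / 2 - (∑ t, Q t * ent (g t)) / 2)) := by
  have e1 := sum_mono2 hP hQ (fun t w => hmin (f t) (g w) (hf t) (hg w))
  have e2 := sum_fst (P := P) hQ (fun _ => c)
  have e3 : ∑ t, P t * c = c := by
    rw [← Finset.sum_mul, ((isDist_iff _).1 hP).2, one_mul]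
  have e4 := sum_fst (P := P) hQ (fun t => - ent (f t) / 2
    + (1 / 32) * (ent (conv p (f t)) - ent p / 2 - ent (f t) / 2))
  have e5 := sum_snd (Q := Q) hP (fun t => - ent (g t) / 2
    + (1 / 32) * (ent (conv p (g t)) - ent p / 2 - ent (g t) / 2))
  have x4 : ∑ t, P t * (- ent (f t) / 2 + (1 / 32) * (ent (conv p (f t)) - ent p / 2 - ent (f t) / 2))
    = - (∑ t, P t * ent (f t)) / 2 + (1 / 32) * (∑ t, P t * ent (conv p (f t)) - ent p / 2
      - (∑ t, P t * ent (f t)) / 2) := by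
    have : ∀ t, P t * (- ent (f t) / 2
      + (1 / 32) * (ent (conv p (f t)) - ent p / 2 - ent (f t) / 2))
      = (-1 / 2 - 1 / 64) * (P t * ent (f t)) + (1 / 32) * (P t * ent (conv p (f t)))
        + P t * (- ent p / 64) := fun t => by ring
    simp only [this, Finset.sum_add_distrib, ← Finset.mul_sum]
    rw [← Finset.sum_mul, ((isDist_iff _).1 hP).2]
    ring
  have x5 : ∑ t, Q t * (- ent (g t) / 2 + (1 / 32) * (ent (conv p (g t)) - ent p / 2 - ent (g t) / 2))
    = - (∑ t, Q t * ent (g t)) / 2 + (1 / 32) * (∑ t, Q t * ent (conv p (g t)) - ent p / 2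
      - (∑ t, Q t * ent (g t)) / 2) := by
    have : ∀ t, Q t * (- ent (g t) / 2
      + (1 / 32) * (ent (conv p (g t)) - ent p / 2 - ent (g t) / 2))
      = (-1 / 2 - 1 / 64) * (Q t * ent (g t)) + (1 / 32) * (Q t * ent (conv p (g t)))
        + Q t * (- ent p / 64) := fun t => by ring
    simp only [this, Finset.sum_add_distrib, ← Finset.mul_sum]
    rw [← Finset.sum_mul, ((isDist_iff _).1 hQ).2]
    ring
  have e6 : ∑ t, ∑ w, P t * Q w * tauF p (f t) (g w)
      = ∑ t, ∑ w, P t * Q w * ent (conv (f t) (g w))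
      + ∑ t, ∑ w, P t * Q w * (- ent (f t) / 2
        + (1 / 32) * (ent (conv p (f t)) - ent p / 2 - ent (f t) / 2))
      + ∑ t, ∑ w, P t * Q w * (- ent (g w) / 2
        + (1 / 32) * (ent (conv p (g w)) - ent p / 2 - ent (g w) / 2)) := by
    rw [← Finset.sum_add_distrib, ← Finset.sum_add_distrib]
    refine Finset.sum_congr rfl fun t _ => ?_
    rw [← Finset.sum_add_distrib, ← Finset.sum_add_distrib]
    refine Finset.sum_congr rfl fun w _ => ?_
    unfold tauF dRuzsa
    ring
  linarith

lemma avg_min_diag {p : G → ℝ} {c : ℝ} (hmin : ∀ a b, IsDist a → IsDist b → c ≤ tauF p a b)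
    {P : τ → ℝ} {f : τ → G → ℝ} (hP : IsDist P) (hf : ∀ t, IsDist (f t)) :
    c ≤ ∑ t, P t * (ent (conv (f t) (f t)) - ent (f t))
      + (1 / 16) * (∑ t, P t * ent (conv p (f t)) - ent p / 2 - (∑ t, P t * ent (f t)) / 2) := by
  have e1 : ∑ t, P t * c ≤ ∑ t, P t * tauF p (f t) (f t) := Finset.sum_le_sum fun t _ =>
    mul_le_mul_of_nonneg_left (hmin _ _ (hf t) (hf t)) (hP.1 t)
  have e3 : ∑ t, P t * c = c := by
    rw [← Finset.sum_mul, ((isDist_iff _).1 hP).2, one_mul]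
  have this : ∀ t, P t * tauF p (f t) (f t) = P t * (ent (conv (f t) (f t)) - ent (f t))
      + (1 / 16) * (P t * ent (conv p (f t))) + P t * (- ent p / 32)
      + (-1 / 32) * (P t * ent (f t)) := by
    intro t; unfold tauF dRuzsa; ring
  have e4 : ∑ t, P t * (- ent p / 32) = - ent p / 32 := by
    rw [← Finset.sum_mul, ((isDist_iff _).1 hP).2, one_mul]
  simp only [this, Finset.sum_add_distrib, ← Finset.mul_sum] at e1
  linarith

lemma min_tau_zero {p x y : G → ℝ} (hp : IsDist p) (hx : IsDist x) (hy : IsDist y)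
    (hmin : ∀ a b, IsDist a → IsDist b → tauF p x y ≤ tauF p a b) : dRuzsa x y ≤ 0 := by
  have hxy := prodDist_isDist hx hy
  have hyx := prodDist_isDist hy hx
  have hz := conv_isDist hx hy
  have hu := conv_isDist hz hz
  have hzz := prodDist_isDist hz hz
  -- first fibring
  obtain ⟨P, f, kf⟩ := exists_isKer hxy (fun ω : G × G => ω.1) (fun ω => ω.1 + ω.2)
  obtain ⟨Q, g, kg⟩ := exists_isKer hyx (fun ω : G × G => ω.1) (fun ω => ω.1 + ω.2)
  have a1 := avg_min hmin kf.distP kf.distf kg.distP kg.distf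
  have a2 := kf.ent_sum_add hx hy
  have a3 := kg.ent_sum_add hy hx
  have a4 := fibring hxy kf (X' := fun ω => ω.2) hyx kg (Y' := fun ω => ω.2)
    (fun _ _ e => e) (fun _ _ e => e)
  have a5 := kf.conv_le hxy hp
  have a6 := kg.conv_le hyx hp
  have w1 : ∀ {a b : G → ℝ}, IsDist b → push (fun ω : G × G => ω.1) (prodDist a b) = a :=
    fun hb => by rw [push_fst _ hb (fun a => a), push_id]
  have w2 : ∀ {a b : G → ℝ}, IsDist a → push (fun ω : G × G => ω.2) (prodDist a b) = b :=
    fun hb => by rw [push_snd _ hb (fun a => a), push_id]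
  rw [w1 hy, w1 hx, w2 hx, w2 hy, ← conv_eq_push, ← conv_eq_push, conv_comm' y x] at a4
  rw [w1 hy] at a5
  rw [w1 hx] at a6
  rw [conv_comm' y x] at a3
  -- second fibring
  obtain ⟨R, k, kk⟩ := exists_isKer hzz (fun ω : G × G => ω.1) (fun ω => ω.1 + ω.2)
  have b1 := avg_min hmin kk.distP kk.distf kk.distP kk.distf
  have b2 := kk.ent_sum_add hz hz
  have b3 := eI_kernel hz kk
  have b4 := kk.conv_le hzz hp
  rw [w1 hz] at b4
  have b5 := hmin _ _ hu hu
  have v1 := KV hp hx hy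
  have v2 := KV hp hy hx
  rw [conv_comm' y x] at v2
  have v3 := KV hp hz hz
  -- endgame
  obtain ⟨E, e, ke⟩ := exists_isKer (mu4_isDist hz) eU (fun ω => (eS ω, eW ω))
  have c1 := avg_min_diag hmin ke.distP ke.distf
  obtain ⟨c2, c3, -⟩ := endgame hz ke
  have c4 := ke.conv_le (mu4_isDist hz) hp
  rw [push_eU hz] at c4
  unfold tauF dRuzsa at *
  linarith

lemma conv_const {x y : G → ℝ} (hx : IsDist x) (hy : IsDist y) (h : ent (conv x y) ≤ ent x) :
    ∀ b b' c, y b ≠ 0 → y b' ≠ 0 → x (c - b) = x (c - b') := by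
  have hy' := (isDist_iff _).1 hy
  have key : ∀ c, conv x y c = ∑ b, y b • x (c - b) := by
    intro c
    rw [conv_comm', conv, finsum_eq_sum_of_fintype]
    rfl
  have hle : ∀ c ∈ Finset.univ, ∑ b, y b • Real.negMulLog (x (c - b)) ≤
      Real.negMulLog (conv x y c) := by
    intro c _
    rw [key]
    exact Real.concaveOn_negMulLog.le_map_sum (fun b _ => hy'.1 b) hy'.2 (fun b _ => hx.1 _)
  have hsum : ∑ c, ∑ b, y b • Real.negMulLog (x (c - b)) = ent x := by
    rw [Finset.sum_comm]
    have : ∀ b, ∑ c, y b • Real.negMulLog (x (c - b)) = y b * ent x := by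
      intro b
      simp only [smul_eq_mul]
      rw [← Finset.mul_sum, ent_eq,
        ← Equiv.sum_comp (Equiv.subRight b) (fun c => Real.negMulLog (x c))]
      rfl
    simp only [this]
    rw [← Finset.sum_mul, hy'.2, one_mul]
  have heq : ∑ c, ∑ b, y b • Real.negMulLog (x (c - b)) = ∑ c, Real.negMulLog (conv x y c) := by
    refine le_antisymm (Finset.sum_le_sum hle) ?_
    rw [hsum, ← ent_eq]; exact h
  have hall := (Finset.sum_eq_sum_iff_of_le hle).1 heq
  intro b b' c hb hb'
  have h1 := (hall c (Finset.mem_univ _)).symm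
  rw [key] at h1
  have h2 := (Real.strictConcaveOn_negMulLog.map_sum_eq_iff' (fun b _ => hy'.1 b) hy'.2
    (fun b _ => hx.1 _)).1 h1
  rw [h2 b (Finset.mem_univ _) hb, h2 b' (Finset.mem_univ _) hb']

/-- Stabiliser of a function. -/
def stab (x : G → ℝ) : Submodule (ZMod 2) G :=
  AddSubgroup.toZModSubmodule 2
    { carrier := {v | ∀ a, x (a + v) = x a}
      zero_mem' := fun a => by rw [add_zero]
      add_mem' := fun {v w} hv hw a => by rw [← add_assoc, hw, hv]
      neg_mem' := fun {v} hv a => by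
        have := hv (a + -v)
        rw [neg_add_cancel_right] at this
        exact this.symm }

lemma mem_stab {x : G → ℝ} {v : G} : v ∈ stab x ↔ ∀ a, x (a + v) = x a := Iff.rfl

lemma lc_stab_le {x : G → ℝ} (hx : IsDist x) : lc (stab x) ≤ ent x := by
  classical
  have hx' := (isDist_iff _).1 hx
  have hpos : (0:ℝ) < Nat.card (stab x) := by exact_mod_cast Nat.card_pos
  have hb : ∀ a, (Nat.card (stab x) : ℝ) * x a ≤ 1 := by
    intro a
    have e1 : (Nat.card (stab x) : ℝ) * x a = ∑ v : stab x, x (a + v) := by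
      rw [Finset.sum_congr rfl (fun v _ => mem_stab.1 v.2 a), Finset.sum_const, Finset.card_univ,
        nsmul_eq_mul, Nat.card_eq_fintype_card]
    rw [e1, ← hx'.2]
    have e2 : ∑ v : stab x, x (a + v) = ∑ b ∈ Finset.univ.image (fun v : stab x => a + (v : G)), x b := by
      rw [Finset.sum_image]
      intro v _ w _ e
      exact Subtype.ext (add_left_cancel e)
    rw [e2]
    exact Finset.sum_le_sum_of_subset_of_nonneg (Finset.subset_univ _) fun b _ _ => hx'.1 b
  have : ∑ a, x a * lc (stab x) ≤ ∑ a, Real.negMulLog (x a) := by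
    refine Finset.sum_le_sum fun a _ => ?_
    rcases (hx'.1 a).eq_or_lt with h0 | h0
    · rw [← h0]; simp
    · have h1 : Real.log (Nat.card (stab x) * x a) ≤ 0 :=
        Real.log_nonpos (mul_nonneg hpos.le h0.le) (hb a)
      rw [Real.log_mul hpos.ne' h0.ne'] at h1
      unfold Real.negMulLog lc
      nlinarith
  rw [← Finset.sum_mul, hx'.2, one_mul, ← ent_eq] at this
  exact this

lemma hQ_stab {x y : G → ℝ} (hy : IsDist y)
    (h : ∀ b b' c, y b ≠ 0 → y b' ≠ 0 → x (c - b) = x (c - b')) : hQ (stab x) y = 0 := by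
  classical
  have hy' := (isDist_iff _).1 hy
  rw [hQ, ent_push, neg_eq_zero]
  refine Finset.sum_eq_zero fun b _ => ?_
  by_cases hb : y b = 0
  · rw [hb, zero_mul]
  · have : push (stab x).mkQ y ((stab x).mkQ b) = 1 := by
      rw [push_eq, ← hy'.2]
      refine Finset.sum_congr rfl fun b' _ => ?_
      by_cases hb' : y b' = 0
      · rw [hb', ite_self]
      · rw [if_pos]
        rw [mkQ_eq_iff, mem_stab]
        intro a
        have := h b b' (a + b') hb hb'
        rw [add_sub_cancel_right] at this
        rw [← add_sub_assoc, this]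
    rw [this, Real.log_one, mul_zero]

lemma pfr_one {p q : G → ℝ} (hp : IsDist p) (hq : IsDist q)
    (hr : ∀ V : Submodule (ZMod 2) G, ent p - hQ V p ≤ 1 / 2 * lc V) :
    ent p ≤ 396 * dRuzsa p q := by
  obtain ⟨x, y, hx, hy, hmin⟩ := exists_min_tau hp
  have h0 := min_tau_zero hp hx hy hmin
  have h1 := hmin q q hq hq
  have h2 := triangle hq hp hq
  rw [conv_comm' q p] at h2
  have h3 := ent_le_conv hx hy
  have h4 := ent_le_conv' hx hy
  have h5 := ent_le_conv hp hx
  have h6 := ent_le_conv' hp hx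
  unfold tauF dRuzsa at *
  have hs := conv_const hx hy (by linarith)
  have h7 := lc_stab_le hx
  have h8 := hQ_stab hy hs
  have h9 := fibre_conv (bot_le : ⊥ ≤ stab x) hp hy
  rw [hQ_bot hy, hQ_bot (conv_isDist hp hy)] at h9
  have h10 := hQ_le_conv (stab x) hp hy
  have h11 := ent_le_conv hp hy
  have h12 := ent_le_conv' hp hy
  have h13 := hr (stab x)
  linarith

end pfr

lemma PA_base : PA (1 / 2 - 1 / 792) (1 / 2) := by
  intro G _ _ _ p q hp hq hr
  cases nonempty_fintype G
  have h1 := pfr_one hp hq (fun V => by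
    have := hr V
    have := hQ_le V hq
    linarith)
  have h2 := pfr_one hq hp (fun V => by
    have := hr V
    have := hQ_le V hp
    linarith)
  unfold dRuzsa at h1 h2
  rw [conv_comm' q p] at h2
  linarith

set_option linter.unusedSectionVars false

/-- `κ`-rigidity of a single law. -/
def Rig {G : Type} [AddCommGroup G] [Module (ZMod 2) G] (κ : ℝ) (p : G → ℝ) : Prop :=
  ∀ V : Submodule (ZMod 2) G, ent p - hQ V p ≤ κ * lc V

section core
variable {G : Type} [AddCommGroup G] [Module (ZMod 2) G] [Fintype G]

lemma push_fst' {a b : G → ℝ} (hb : IsDist b) :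
    push (fun ω : G × G => ω.1) (prodDist a b) = a := by
  rw [push_fst _ hb (fun a => a), push_id]

lemma push_snd' {a b : G → ℝ} (ha : IsDist a) :
    push (fun ω : G × G => ω.2) (prodDist a b) = b := by
  rw [push_snd _ ha (fun a => a), push_id]

lemma sum_sD {τ τ' : Type} [Fintype τ] [Fintype τ'] {P : τ → ℝ} {Q : τ' → ℝ} (hP : IsDist P)
    (hQ : IsDist Q) (f : τ → G → ℝ) (g : τ' → G → ℝ) :
    ∑ t, ∑ w, P t * Q w * (ent (f t) + ent (g w) - ent (conv (f t) (g w))) =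
      ∑ t, P t * ent (f t) + ∑ w, Q w * ent (g w)
        - ∑ t, ∑ w, P t * Q w * ent (conv (f t) (g w)) := by
  rw [← sum_fst (P := P) hQ (fun t => ent (f t)), ← sum_snd (Q := Q) hP (fun w => ent (g w)),
    ← Finset.sum_add_distrib, ← Finset.sum_sub_distrib]
  refine Finset.sum_congr rfl fun t _ => ?_
  rw [← Finset.sum_add_distrib, ← Finset.sum_sub_distrib]
  exact Finset.sum_congr rfl fun w _ => by ring

/-- Doubling step: `s[Z;Z] ≥ 2 (1-ρ) s[X;Y]`. -/
lemma double_step {η κ' δ : ℝ} (h : PA η κ') (hκ : 0 < κ') (hδ : 0 < δ) (hη : 0 ≤ η)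
    {p q : G → ℝ} (hp : IsDist p) (hq : IsDist q) (rp : Rig (δ ^ 2 * κ' / 4) p) :
    2 * (1 - (η + δ)) * (ent p + ent q - ent (conv p q)) ≤
      2 * ent (conv p q) - ent (conv (conv p q) (conv p q)) := by
  have hxy := prodDist_isDist hp hq
  have hyx := prodDist_isDist hq hp
  obtain ⟨P, f, kf⟩ := exists_isKer hxy (fun ω : G × G => ω.1) (fun ω => ω.1 + ω.2)
  obtain ⟨Q, g, kg⟩ := exists_isKer hyx (fun ω : G × G => ω.1) (fun ω => ω.1 + ω.2)
  have a2 := kf.ent_sum_add hp hq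
  have a3 := kg.ent_sum_add hq hp
  have a4 := fibring hxy kf (X' := fun ω => ω.2) hyx kg (Y' := fun ω => ω.2)
    (fun _ _ e => e) (fun _ _ e => e)
  rw [push_fst' hq, push_fst' hp, push_snd' hp, push_snd' hq, ← conv_eq_push, ← conv_eq_push,
    conv_comm' q p] at a4
  rw [conv_comm' q p] at a3
  have a5 := lemC h hκ hδ hη hxy kf (by rw [push_fst' hq]; exact rp) kg.distP kg.distf
  rw [sum_sD kf.distP kg.distP, a2, a3] at a5
  linarith

lemma self_le {η κ' δ : ℝ} (h : PA η κ') (hκ : 0 < κ') (hδ : 0 < δ) (hδ1 : δ ≤ 1)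
    {p : G → ℝ} (hp : IsDist p) (rp : Rig (δ ^ 2 * κ' / 4) p) :
    2 * ent p - ent (conv p p) ≤ 2 * η * ent p := by
  have := h G p p hp hp (fun V => by
    have h1 := rp V
    have h2 := lc_nonneg V
    have h3 : δ ^ 2 ≤ 1 := by nlinarith
    have h4 : δ ^ 2 * (κ' * lc V) ≤ 1 * (κ' * lc V) :=
      mul_le_mul_of_nonneg_right h3 (by positivity)
    have h5 : 0 ≤ κ' * lc V := by positivity
    nlinarith)
  linarith

lemma core_num {ρ θ δ H hz hu hS hc I : ℝ} (r0 : 0 ≤ ρ) (r1 : ρ ≤ 1 / 2)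
    (hs : (ρ - θ) * H ≤ H - hz) (s1 : 2 * (1 - ρ) * (H - hz) ≤ 2 * hz - hu)
    (s2 : 2 * (1 - ρ) * (hz + hz - hu) ≤ 2 * hu - hS) (l1 : 2 * hu - hS ≤ 2 * ρ * hu)
    (l2 : 2 * hS - hc ≤ 2 * ρ * hS) (bz : hz ≤ H) (bu : hu ≤ hz + hz)
    (k3 : hz + hz - hu + (hz + hz - hu) - (2 * hu - hS - I) ≤
      ρ * (hz + hz - hu + (hz + hz - hu))) (i0 : 0 ≤ I)
    (fin : 2 * (2 * hu - hS - I) - (2 * hS - hc) ≤ δ * H + 1188 * I) :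
    2 * ρ * ((ρ - θ) * H) ≤ (δ + 4768 * θ) * H := by
  have x1 : 2 * ρ * hz - (2 * hz - hu) ≤ 2 * θ * H := by linarith
  have x2 : I ≤ 4 * θ * H := by linarith
  have y0 : 0 ≤ (1 - 2 * ρ) * (H - hz) := mul_nonneg (by linarith) (by linarith)
  have y1 : H - hz ≤ 2 * hz - hu := by linarith
  have y0' : 0 ≤ (1 - 2 * ρ) * (hz + hz - hu) := mul_nonneg (by linarith) (by linarith)
  have y2 : 2 * hz - hu ≤ 2 * hu - hS := by linarith
  have y3 : 2 * ρ * ((ρ - θ) * H) ≤ 2 * ρ * (2 * hu - hS) :=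
    mul_le_mul_of_nonneg_left (by linarith) (by linarith)
  have x4 : -4 * θ * H ≤ (2 * hu - hS) - 2 * ρ * hu := by linarith
  linarith

lemma core {η κ' δ θ : ℝ} (h : PA η κ') (hκ : 0 < κ') (hδ : 0 < δ) (hδ1 : δ ≤ 1 / 792) (hη : 0 ≤ η)
    (hη1 : η ≤ 1 / 2 - 1 / 792) {p q z u S : G → ℝ} (hp : IsDist p) (hq : IsDist q)
    (ez : z = conv p q) (eu : u = conv z z) (eS' : S = conv u u)
    (rp : Rig (δ ^ 2 * κ' / 4) p) (rz : Rig (δ ^ 2 * κ' / 4) z) (ru : Rig (δ ^ 2 * κ' / 4) u)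
    (rS : Rig (δ ^ 2 * κ' / 4) S)
    (hs : (η + δ - θ) * (ent p + ent q) ≤ ent p + ent q - ent (conv p q)) :
    2 * (η + δ) * ((η + δ - θ) * (ent p + ent q)) ≤ (δ + 4768 * θ) * (ent p + ent q) := by
  have hz : IsDist z := ez ▸ conv_isDist hp hq
  have hu : IsDist u := eu ▸ conv_isDist hz hz
  have hS : IsDist S := eS' ▸ conv_isDist hu hu
  have hzz := prodDist_isDist hz hz
  have s1 := double_step h hκ hδ hη hp hq rp
  have s2 := double_step h hκ hδ hη hz hz rz
  rw [← ez] at s1 hs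
  rw [← eu] at s1 s2
  rw [← eS'] at s2
  have l1 := self_le h hκ hδ (by linarith) hu ru
  have l2 := self_le h hκ hδ (by linarith) hS rS
  rw [← eS'] at l1
  have nz := ent_nonneg hz
  have nu := ent_nonneg hu
  have nS := ent_nonneg hS
  have np := ent_nonneg hp
  have nq := ent_nonneg hq
  have bz : ent z ≤ ent p + ent q := by rw [ez]; exact conv_le_add hp hq
  have bu : ent u ≤ ent z + ent z := by rw [eu]; exact conv_le_add hz hz
  have bS : ent S ≤ ent u + ent u := by rw [eS']; exact conv_le_add hu hu
  -- the kernel of `Z | U`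
  obtain ⟨R, k, kk⟩ := exists_isKer hzz (fun ω : G × G => ω.1) (fun ω => ω.1 + ω.2)
  have k1 := kk.ent_sum_add hz hz
  have k2 := eI_kernel hz kk
  have k3 := lemC h hκ hδ hη hzz kk (by rw [push_fst' hz]; exact rz) kk.distP kk.distf
  rw [sum_sD kk.distP kk.distP, k2, k1] at k3
  -- endgame
  obtain ⟨P, f, ke⟩ := exists_isKer (mu4_isDist hz) eU (fun ω => (eS ω, eW ω))
  obtain ⟨c1, c2, c3⟩ := endgame hz ke
  rw [← eu, ← eS'] at c1 c3 k3
  have hex : ∀ t, ∃ V : Submodule (ZMod 2) G, κ' * lc V ≤ 2 * ent (f t) ∧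
      hQ V (f t) ≤ 396 * (ent (conv (f t) (f t)) - ent (f t)) ∧
      ∀ a : G → ℝ, IsDist a → ent a + ent (f t) - ent (conv a (f t)) ≤
        (ent a - hQ V a) + hQ V (f t) := by
    intro t
    have hf := ke.distf t
    obtain ⟨V, -, v1, v2⟩ := PA_relB h ⊥ hf hf
    rw [lc_bot, hQ_bot hf] at v1
    have v3 := hQ_nonneg V hf
    have v4 := fibre_conv (bot_le : ⊥ ≤ V) hf hf
    rw [hQ_bot hf, hQ_bot (conv_isDist hf hf)] at v4
    have v5 : η * (hQ V (f t) + hQ V (f t)) ≤ (1 / 2 - 1 / 792) * (hQ V (f t) + hQ V (f t)) :=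
      mul_le_mul_of_nonneg_right hη1 (by linarith)
    refine ⟨V, by linarith, by linarith, fun a ha => ?_⟩
    have v6 := fibre_conv (bot_le : ⊥ ≤ V) ha hf
    rw [hQ_bot hf, hQ_bot (conv_isDist ha hf)] at v6
    have v7 := hQ_le_conv V ha hf
    linarith
  choose V hV1 hV2 hV3 using hex
  have e1 := sum_mono2 ke.distP ke.distP (fun t w => hV3 w (f t) (ke.distf t))
  rw [sum_sD ke.distP ke.distP] at e1
  have e2 : ∑ t, ∑ w, P t * P w * ((ent (f t) - hQ (V w) (f t)) + hQ (V w) (f w))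
      = ∑ w, P w * (∑ t, P t * (ent (f t) - hQ (V w) (f t))) + ∑ w, P w * hQ (V w) (f w) := by
    rw [← sum_snd (Q := P) ke.distP (fun w => hQ (V w) (f w))]
    have : ∑ w, P w * (∑ t, P t * (ent (f t) - hQ (V w) (f t)))
      = ∑ t, ∑ w, P t * P w * (ent (f t) - hQ (V w) (f t)) := by
      rw [Finset.sum_comm]
      refine Finset.sum_congr rfl fun w _ => ?_
      rw [Finset.mul_sum]
      exact Finset.sum_congr rfl fun t _ => by ring
    rw [this, ← Finset.sum_add_distrib]
    refine Finset.sum_congr rfl fun t _ => ?_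
    rw [← Finset.sum_add_distrib]
    exact Finset.sum_congr rfl fun w _ => by ring
  have e3 : ∑ w, P w * (∑ t, P t * (ent (f t) - hQ (V w) (f t)))
      ≤ ∑ w, P w * (δ ^ 2 / 2 * ent (f w)) := by
    refine Finset.sum_le_sum fun w _ => mul_le_mul_of_nonneg_left ?_ (ke.distP.1 w)
    have h1 := ke.cap (mu4_isDist hz) (V w).mkQ
    rw [push_eU hz, ← eu] at h1
    have h2 := ru (V w)
    have h3 := mul_le_mul_of_nonneg_left (hV1 w) (by positivity : 0 ≤ δ ^ 2 / 4)
    unfold hQ at h2 ⊢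
    nlinarith
  have e4 : ∑ w, P w * (δ ^ 2 / 2 * ent (f w)) = δ ^ 2 / 2 * ∑ w, P w * ent (f w) := by
    rw [Finset.mul_sum]
    exact Finset.sum_congr rfl fun w _ => by ring
  have e5 : ∑ w, P w * hQ (V w) (f w) ≤
      396 * ∑ w, P w * (ent (conv (f w) (f w)) - ent (f w)) := by
    rw [Finset.mul_sum]
    refine Finset.sum_le_sum fun w _ => ?_
    have := mul_le_mul_of_nonneg_left (hV2 w) (ke.distP.1 w)
    linarith
  have e6 : 0 ≤ ∑ w, P w * (ent (conv (f w) (f w)) - ent (f w)) :=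
    Finset.sum_nonneg fun w _ => mul_nonneg (ke.distP.1 w)
      (by have := ent_le_conv (ke.distf w) (ke.distf w); linarith)
  have e7 := ke.concave (mu4_isDist hz)
  rw [push_eU hz, ← eu] at e7
  have e8 : δ ^ 2 / 2 * ∑ w, P w * ent (f w) ≤ δ ^ 2 / 2 * (2 * (ent p + ent q)) :=
    mul_le_mul_of_nonneg_left (by linarith) (by positivity)
  have e9 : δ ^ 2 * (ent p + ent q) ≤ δ * (ent p + ent q) :=
    mul_le_mul_of_nonneg_right (by nlinarith) (by linarith)
  have r1 : η + δ ≤ 1 / 2 := by linarith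
  have r0 : 0 ≤ η + δ := by linarith
  have l1' : 2 * ent u - ent S ≤ 2 * (η + δ) * ent u := by
    have := mul_nonneg hδ.le nu
    linarith
  have l2' : 2 * ent S - ent (conv S S) ≤ 2 * (η + δ) * ent S := by
    have := mul_nonneg hδ.le nS
    linarith
  refine core_num (I := eI z) (hc := ent (conv S S)) r0 r1 hs s1 s2 l1' l2' bz bu k3 ?_ ?_
  · linarith
  · linarith

end core

set_option linter.unusedSectionVars false

lemma improve {m η κ' δ : ℝ} (hm : 0 < m) (hδe : δ = m ^ 2 / 10000) (h : PA η κ') (hκ : 0 < κ')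
    (h1 : m ≤ η) (h2 : η < m + δ) (h3 : η ≤ 1 / 2 - 1 / 792) :
    PA (m - δ) (δ * (δ ^ 2 * κ' / 4) / 8) := by
  have hδ : 0 < δ := by rw [hδe]; positivity
  have hm2 : m ≤ 1 / 2 := by linarith
  have hδm : δ ≤ m / 20000 := by rw [hδe]; nlinarith
  have hδ1 : δ ≤ 1 / 792 := by linarith
  intro G _ _ _ p q hp hq hr
  by_contra hcon
  push Not at hcon
  obtain ⟨z, ez⟩ : ∃ z, z = conv p q := ⟨_, rfl⟩
  obtain ⟨u, eu⟩ : ∃ u, u = conv z z := ⟨_, rfl⟩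
  obtain ⟨S, eS'⟩ : ∃ S, S = conv u u := ⟨_, rfl⟩
  have hz : IsDist z := ez ▸ conv_isDist hp hq
  have hu : IsDist u := eu ▸ conv_isDist hz hz
  have hS : IsDist S := eS' ▸ conv_isDist hu hu
  cases nonempty_fintype G
  have np := ent_nonneg hp
  have nq := ent_nonneg hq
  have nz := ent_nonneg hz
  have bz : ent z ≤ ent p + ent q := by rw [ez]; exact conv_le_add hp hq
  have bu : ent u ≤ ent z + ent z := by rw [eu]; exact conv_le_add hz hz
  have bS : ent S ≤ ent u + ent u := by rw [eS']; exact conv_le_add hu hu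
  rw [← ez] at hcon
  set κ := δ ^ 2 * κ' / 4 with hκd
  have hκ0 : 0 < κ := by positivity
  have hHpos : 0 < ent p + ent q := by
    by_contra hn
    have h0 : ent p + ent q = 0 := by linarith
    rw [h0] at hcon
    linarith
  obtain ⟨V, hV⟩ := Finite.exists_min (fun V : Submodule (ZMod 2) G =>
    hQ V p + hQ V q + hQ V z + hQ V u + hQ V S + κ * lc V)
  have hV0 := hV ⊥
  rw [hQ_bot hp, hQ_bot hq, hQ_bot hz, hQ_bot hu, hQ_bot hS, lc_bot] at hV0
  have v1 : κ * lc V ≤ 8 * (ent p + ent q) := by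
    have := hQ_nonneg V hp
    have := hQ_nonneg V hq
    have := hQ_nonneg V hz
    have := hQ_nonneg V hu
    have := hQ_nonneg V hS
    linarith
  have v2 := hr V
  have v3 : (ent p - hQ V p) + (ent q - hQ V q) ≤ δ * (ent p + ent q) := by
    have := mul_le_mul_of_nonneg_left v1 (by linarith : 0 ≤ δ / 8)
    linarith
  have v4 := hQ_le V hp
  have v5 := hQ_le V hq
  have v6 := fibre_conv (bot_le : ⊥ ≤ V) hp hq
  rw [← ez, hQ_bot hq, hQ_bot hz] at v6
  -- rigidity in the quotient
  have hrig : Rig κ (push V.mkQ p) ∧ Rig κ (push V.mkQ z) ∧ Rig κ (push V.mkQ u) ∧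
      Rig κ (push V.mkQ S) := by
    have key : ∀ W : Submodule (ZMod 2) (G ⧸ V),
        (hQ V p - hQ W (push V.mkQ p)) + (hQ V q - hQ W (push V.mkQ q))
        + (hQ V z - hQ W (push V.mkQ z)) + (hQ V u - hQ W (push V.mkQ u))
        + (hQ V S - hQ W (push V.mkQ S)) ≤ κ * lc W ∧
        0 ≤ hQ V p - hQ W (push V.mkQ p) ∧ 0 ≤ hQ V q - hQ W (push V.mkQ q) ∧
        0 ≤ hQ V z - hQ W (push V.mkQ z) ∧ 0 ≤ hQ V u - hQ W (push V.mkQ u) ∧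
        0 ≤ hQ V S - hQ W (push V.mkQ S) := by
      intro W
      have hW := hV (W.comap V.mkQ)
      rw [← hQ_quot V W hp, ← hQ_quot V W hq, ← hQ_quot V W hz, ← hQ_quot V W hu,
        ← hQ_quot V W hS, lc_comap] at hW
      refine ⟨by linarith, ?_, ?_, ?_, ?_, ?_⟩
      · exact sub_nonneg.2 (hQ_le W (push_isDist hp _))
      · exact sub_nonneg.2 (hQ_le W (push_isDist hq _))
      · exact sub_nonneg.2 (hQ_le W (push_isDist hz _))
      · exact sub_nonneg.2 (hQ_le W (push_isDist hu _))
      · exact sub_nonneg.2 (hQ_le W (push_isDist hS _))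
    refine ⟨fun W => ?_, fun W => ?_, fun W => ?_, fun W => ?_⟩
    · obtain ⟨k0, k1, k2, k3, k4, k5⟩ := key W
      change hQ V p - _ ≤ _
      linarith
    · obtain ⟨k0, k1, k2, k3, k4, k5⟩ := key W
      change hQ V z - _ ≤ _
      linarith
    · obtain ⟨k0, k1, k2, k3, k4, k5⟩ := key W
      change hQ V u - _ ≤ _
      linarith
    · obtain ⟨k0, k1, k2, k3, k4, k5⟩ := key W
      change hQ V S - _ ≤ _
      linarith
  obtain ⟨rp, rz, ru, rS⟩ := hrig
  cases nonempty_fintype (G ⧸ V)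
  have ez' : push V.mkQ z = conv (push V.mkQ p) (push V.mkQ q) := by rw [ez, push_mkQ_conv]
  have hmul : (η + δ - 4 * δ) * (hQ V p + hQ V q) ≤ (η + δ - 4 * δ) * (ent p + ent q) :=
    mul_le_mul_of_nonneg_left (by linarith) (by linarith)
  have hmul2 : (η - 3 * δ) * (ent p + ent q) ≤ (m - 2 * δ) * (ent p + ent q) :=
    mul_le_mul_of_nonneg_right (by linarith) (by linarith)
  have fin := core (θ := 4 * δ) h hκ hδ hδ1 (by linarith) h3 (push_isDist hp _) (push_isDist hq _)
    ez' (by rw [eu, push_mkQ_conv]) (by rw [eS', push_mkQ_conv]) rp rz ru rS (by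
      rw [← ez']
      change (η + δ - 4 * δ) * (hQ V p + hQ V q) ≤ hQ V p + hQ V q - hQ V z
      linarith)
  change 2 * (η + δ) * ((η + δ - 4 * δ) * (hQ V p + hQ V q)) ≤
    (δ + 4768 * (4 * δ)) * (hQ V p + hQ V q) at fin
  have hpos : 0 < hQ V p + hQ V q := by nlinarith
  have fin2 : 2 * (η + δ) * (η + δ - 4 * δ) ≤ δ + 4768 * (4 * δ) := by
    rw [← mul_assoc] at fin
    exact le_of_mul_le_mul_right fin hpos
  have f3 : m * (m - 4 * δ) ≤ (η + δ) * (η + δ - 4 * δ) :=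
    mul_le_mul (by linarith) (by linarith) (by linarith) (by linarith)
  have f4 : m ^ 2 = 10000 * δ := by rw [hδe]; ring
  nlinarith

lemma PA_mono {η η' κ : ℝ} (h : PA η κ) (hle : η ≤ η') : PA η' κ := by
  intro G _ _ _ p q hp hq hr
  have h1 := h G p q hp hq hr
  have h2 := ent_nonneg hp
  have h3 := ent_nonneg hq
  have := mul_le_mul_of_nonneg_right hle (by linarith : 0 ≤ ent p + ent q)
  linarith

lemma PA_all {ε : ℝ} (hε : 0 < ε) : ∃ κ : ℝ, 0 < κ ∧ PA ε κ := by
  let A : Set ℝ := {η | 0 ≤ η ∧ ∃ κ : ℝ, 0 < κ ∧ PA η κ}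
  have hbd : BddBelow A := ⟨0, fun η h => h.1⟩
  have hbase : (1 / 2 - 1 / 792 : ℝ) ∈ A := ⟨by norm_num, 1 / 2, by norm_num, PA_base⟩
  have hne : A.Nonempty := ⟨_, hbase⟩
  have hm0 : 0 ≤ sInf A := le_csInf hne fun η h => h.1
  have hm1 : sInf A ≤ 1 / 2 - 1 / 792 := csInf_le hbd hbase
  have hm : sInf A = 0 := by
    by_contra hn
    have hpos : 0 < sInf A := lt_of_le_of_ne hm0 (Ne.symm hn)
    obtain ⟨δ, hδ⟩ : ∃ δ, δ = sInf A ^ 2 / 10000 := ⟨_, rfl⟩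
    have hδ0 : 0 < δ := by rw [hδ]; positivity
    have hδm : δ ≤ sInf A := by rw [hδ]; nlinarith
    have : ∃ η ∈ A, η < sInf A + δ ∧ η ≤ 1 / 2 - 1 / 792 := by
      obtain ⟨η, hη, hlt⟩ := exists_lt_of_csInf_lt hne (by linarith : sInf A < sInf A + δ)
      by_cases hc : η ≤ 1 / 2 - 1 / 792
      · exact ⟨η, hη, hlt, hc⟩
      · exact ⟨_, hbase, by linarith, le_refl _⟩
    obtain ⟨η, hη, hlt, hle⟩ := this
    obtain ⟨h0, κ', hκ, hPA⟩ := hη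
    have := improve hpos hδ hPA hκ (csInf_le hbd ⟨h0, κ', hκ, hPA⟩) hlt hle
    have := csInf_le hbd (⟨by linarith, _, by positivity, this⟩ : sInf A - δ ∈ A)
    linarith
  obtain ⟨η, ⟨_, κ, hκ, hPA⟩, hlt⟩ := exists_lt_of_csInf_lt hne (by linarith : sInf A < ε)
  exact ⟨κ, hκ, PA_mono hPA hlt.le⟩

lemma ent_unifOn {G : Type} [AddCommGroup G] [Module (ZMod 2) G] [Finite G]
    (V : Submodule (ZMod 2) G) : ent (unifOn (V : Set G)) = lc V := by
  classical
  cases nonempty_fintype G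
  have hpos : (0:ℝ) < Nat.card V := by exact_mod_cast Nat.card_pos
  rw [ent_eq]
  have : ∀ a, Real.negMulLog (unifOn (V : Set G) a)
      = if a ∈ V then (Nat.card V : ℝ)⁻¹ * lc V else 0 := by
    intro a
    unfold unifOn
    by_cases ha : a ∈ V
    · rw [Set.indicator_of_mem (by exact ha), if_pos ha]
      change Real.negMulLog (Nat.card V : ℝ)⁻¹ = _
      unfold Real.negMulLog lc
      rw [Real.log_inv]; ring
    · rw [Set.indicator_of_notMem (by exact ha), if_neg ha, Real.negMulLog_zero]
  simp only [this]
  rw [← Finset.sum_filter, Finset.sum_const, nsmul_eq_mul]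
  have hc : (Finset.univ.filter (fun a => a ∈ V)).card = Nat.card V := by
    rw [Nat.card_eq_fintype_card, Fintype.card_subtype]
  rw [hc, ← mul_assoc, mul_inv_cancel₀ hpos.ne', one_mul]

lemma condEnt_eq {α β : Type} [Finite α] [Finite β] {r : α × β → ℝ} (hr : IsDist r) :
    condEnt r = ent r - ent (push Prod.snd r) := by
  classical
  cases nonempty_fintype α
  cases nonempty_fintype β
  have hsum : ∀ b, push Prod.snd r b = ∑ a, r (a, b) := by
    intro b
    rw [push_eq, Fintype.sum_prod_type]
    simp
  rw [condEnt, finsum_eq_sum_of_fintype, ent_eq r, ent_eq (push Prod.snd r),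
    Fintype.sum_prod_type_right, ← Finset.sum_sub_distrib]
  refine Finset.sum_congr rfl fun b _ => ?_
  rcases (push_nonneg hr.1 Prod.snd b).eq_or_lt with h0 | h0
  · have hz : ∀ a, r (a, b) = 0 := by
      intro a
      have h1 := hsum b
      rw [← h0] at h1
      exact (Finset.sum_eq_zero_iff_of_nonneg (fun a _ => hr.1 (a, b))).1 h1.symm a
        (Finset.mem_univ _)
    rw [← h0]
    simp [hz]
  · rw [ent_eq, Finset.mul_sum]
    have : ∀ a, push Prod.snd r b * Real.negMulLog (fiber r b a)
        = Real.negMulLog (r (a, b)) + r (a, b) * Real.log (push Prod.snd r b) := by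
      intro a
      unfold fiber Real.negMulLog
      rcases (hr.1 (a, b)).eq_or_lt with ha | ha
      · rw [← ha]; simp
      · rw [Real.log_div ha.ne' h0.ne']
        field_simp
        ring
    simp only [this]
    rw [Finset.sum_add_distrib, ← Finset.sum_mul, ← hsum]
    unfold Real.negMulLog
    ring

lemma condEnt_selfProj {n : ℕ} (V : Submodule (ZMod 2) (Fvec n)) {p : Fvec n → ℝ}
    (hp : IsDist p) : condEnt (selfProj V p) = ent p - hQ V p := by
  rw [selfProj, condEnt_eq (push_isDist hp _), push_push]
  have : ent (push (fun x => (x, V.mkQ x)) p) = ent p := by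
    rw [ent_eq_HH p]
    refine HH_congr hp.1 _ _ fun x y => ?_
    simp only [Prod.mk.injEq]
    exact ⟨fun h => h.1, fun h => ⟨h, by rw [h]⟩⟩
  rw [this]
  rfl

lemma final_aux {ε κ : ℝ} (hε : 0 < ε) (hκ : 0 < κ) (h : PA ε κ) (n : ℕ) (p q : Fvec n → ℝ)
    (hp : IsDist p) (hq : IsDist q) (s : ℝ) (hs : ent (conv p q) = ent p + ent q - s) :
    ∃ V : Submodule (ZMod 2) (Fvec n),
      ent (unifOn (V : Set (Fvec n))) ≤ 1 / κ * (ent p + ent q) ∧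
      condEnt (selfProj V p) ≥ s - ε * (ent p + ent q) ∧
      condEnt (selfProj V q) ≥ s - ε * (ent p + ent q) := by
  obtain ⟨V, -, h1, h2⟩ := PA_relB h ⊥ hp hq
  rw [lc_bot, hQ_bot hp, hQ_bot hq] at h1
  have a1 := hQ_nonneg V hp
  have a2 := hQ_nonneg V hq
  have a3 := hQ_le V hp
  have a4 := hQ_le V hq
  have b1 := fibre_conv (bot_le : ⊥ ≤ V) hp hq
  have b2 := fibre_conv' (bot_le : ⊥ ≤ V) hp hq
  rw [hQ_bot hq, hQ_bot (conv_isDist hp hq)] at b1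
  rw [hQ_bot hp, hQ_bot (conv_isDist hp hq)] at b2
  have c := mul_le_mul_of_nonneg_left (by linarith : hQ V p + hQ V q ≤ ent p + ent q) hε.le
  refine ⟨V, ?_, ?_, ?_⟩
  · rw [ent_unifOn, one_div, ← div_eq_inv_mul, le_div_iff₀ hκ]
    linarith
  · rw [condEnt_selfProj V hp]; linarith
  · rw [condEnt_selfProj V hq]; linarith

/-- For every `ε > 0` there is `L > 0` such that for independent `X, Y` with
`H[X+Y] = H[X]+H[Y]−s`, `s ≥ 0`, there is a subspace `V` with `H[𝐔_V] ≤ L(H[X]+H[Y])` and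
`H[X | π_V(X)], H[Y | π_V(Y)] ≥ s − ε(H[X]+H[Y])`. -/
theorem statement2 :
    ∀ ε : ℝ, 0 < ε → ∃ L : ℝ, 0 < L ∧
      ∀ (n : ℕ) (p q : Fvec n → ℝ), IsDist p → IsDist q →
        ∀ s : ℝ, 0 ≤ s → ent (conv p q) = ent p + ent q - s →
          ∃ V : Submodule (ZMod 2) (Fvec n),
            ent (unifOn (V : Set (Fvec n))) ≤ L * (ent p + ent q) ∧
            condEnt (selfProj V p) ≥ s - ε * (ent p + ent q) ∧
            condEnt (selfProj V q) ≥ s - ε * (ent p + ent q) := by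
  intro ε hε
  obtain ⟨κ, hκ, h⟩ := PA_all hε
  exact ⟨1 / κ, by positivity, fun n p q hp hq s _ hs => final_aux hε hκ h n p q hp hq s hs⟩
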